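/- arXiv:1411.3517 — 4 statements merged into one kernel-verified Lean document; each statement's English description precedes it below -/
import Mathlib

section
/- There exists a universal constant C > 0 such that for every R ≥ 1 the following holds. If A ⊆ F₃^R is an independent set of K₃^{⊗R} with |A| = δ·3^R, then: (1) δ ≤ 1/3; (2) δ = 1/3 if and only if A is a dictator; (3) if δ ≥ 1/3 − ε for some ε ∈ (0,1/3), then there exists a dictator A' with |A Δ A'| ≤ C·ε·3^R (where Δ denotes symmetric difference of sets). -/
open scoped BigOperators

abbrev F3 := ZMod 3

section Aux

open Finset

def Cross {n : ℕ} (A B : Finset (Fin n → F3)) : Prop :=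
  ∀ f ∈ A, ∀ g ∈ B, ∃ i, f i = g i

def sec {n : ℕ} (k : Fin (n+1)) (c : F3) (A : Finset (Fin (n+1) → F3)) : Finset (Fin n → F3) :=
  univ.filter (fun x => (Fin.insertNth k c x : Fin (n+1) → F3) ∈ A)

noncomputable def dn {n : ℕ} (A : Finset (Fin n → F3)) : ℝ := (A.card : ℝ) / 3 ^ n

/-- relative density of `A` in the dictator `x k = a` -/
noncomputable def dk {n : ℕ} (k : Fin n) (a : F3) (A : Finset (Fin n → F3)) : ℝ :=
  3 * dn (A.filter (fun x => x k = a))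

lemma card_F3n (n : ℕ) : Fintype.card (Fin n → F3) = 3 ^ n := by
  simp [F3, ZMod.card]

lemma dn_nonneg {n : ℕ} (A : Finset (Fin n → F3)) : 0 ≤ dn A := by
  unfold dn; positivity

lemma dn_le_one {n : ℕ} (A : Finset (Fin n → F3)) : dn A ≤ 1 := by
  unfold dn
  rw [div_le_one (by positivity)]
  have h := card_le_univ A
  rw [card_F3n] at h
  exact_mod_cast h

lemma mem_sec {n : ℕ} (k : Fin (n+1)) (c : F3) (A : Finset (Fin (n+1) → F3)) (x : Fin n → F3) :
    x ∈ sec k c A ↔ (Fin.insertNth k c x : Fin (n+1) → F3) ∈ A := by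
  simp [sec]

lemma card_sec {n : ℕ} (k : Fin (n+1)) (A : Finset (Fin (n+1) → F3)) :
    A.card = ∑ c, (sec k c A).card := by
  have h1 : ∀ c, (sec k c A).card =
      ∑ x : Fin n → F3, if (Fin.insertNth k c x : Fin (n+1) → F3) ∈ A then 1 else 0 := by
    intro c
    rw [sec, card_filter]
  have h2 : A.card = ∑ x : Fin (n+1) → F3, if x ∈ A then 1 else 0 := by
    simp
  rw [h2, ← (Fin.insertNthEquiv (fun _ => F3) k).sum_comp, Fintype.sum_prod_type]
  simp only [h1]
  rfl

lemma dn_sec {n : ℕ} (k : Fin (n+1)) (A : Finset (Fin (n+1) → F3)) :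
    3 * dn A = ∑ c, dn (sec k c A) := by
  unfold dn
  rw [card_sec k A, ← Finset.sum_div, pow_succ]
  push_cast
  field_simp

lemma cross_sec {n : ℕ} (k : Fin (n+1)) {a b : F3} (hab : a ≠ b) {A B : Finset (Fin (n+1) → F3)}
    (h : Cross A B) : Cross (sec k a A) (sec k b B) := by
  intro f hf g hg
  rw [mem_sec] at hf hg
  obtain ⟨i, hi⟩ := h _ hf _ hg
  revert hi
  refine Fin.succAboveCases k ?_ ?_ i
  · intro hi; simp at hi; exact absurd hi hab
  · intro j hj; simp at hj; exact ⟨j, hj⟩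

lemma dk_eq {n : ℕ} (k : Fin (n+1)) (a : F3) (A : Finset (Fin (n+1) → F3)) :
    dk k a A = dn (sec k a A) := by
  unfold dk
  rw [dn_sec k, Finset.sum_eq_single a]
  · congr 1
    ext x
    simp [mem_sec]
  · intro b _ hb
    have : sec k b (A.filter (fun x => x k = a)) = ∅ := by
      ext x
      simp [mem_sec, hb]
    rw [this]; simp [dn]
  · simp

lemma dk_sum {n : ℕ} (k : Fin n) (A : Finset (Fin n → F3)) :
    3 * dn A = ∑ a, dk k a A := by
  cases n with
  | zero => exact k.elim0
  | succ n => simp only [dk_eq]; exact dn_sec k A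

lemma dk_succ {n : ℕ} (k : Fin n) (a : F3) (A : Finset (Fin (n+1) → F3)) :
    3 * dk k.succ a A = ∑ c, dk k a (sec 0 c A) := by
  unfold dk
  rw [← Finset.mul_sum, dn_sec 0]
  congr 1
  refine Finset.sum_congr rfl fun c _ => ?_
  congr 1
  ext x
  simp [mem_sec]

lemma sort3 (u : F3 → ℝ) : ∃ p q r : F3, p ≠ q ∧ p ≠ r ∧ q ≠ r ∧ u q ≤ u p ∧ u r ≤ u q ∧
    (∀ s : F3, s = p ∨ s = q ∨ s = r) ∧ ∀ f : F3 → ℝ, ∑ c, f c = f p + f q + f r := by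
  have hs : ∀ f : F3 → ℝ, ∑ c, f c = f 0 + f 1 + f 2 := fun f => Fin.sum_univ_three f
  have key : ∀ p q r : F3, p ≠ q → p ≠ r → q ≠ r →
    (∀ s : F3, s = p ∨ s = q ∨ s = r) ∧ ∀ f : F3 → ℝ, ∑ c, f c = f p + f q + f r := by
    intro p q r h1 h2 h3
    refine ⟨?_, ?_⟩
    · revert p q r; decide
    · intro f
      have : (univ : Finset F3) = {p, q, r} := by revert p q r; decide
      rw [this, sum_insert (by simp [h1, h2]), sum_insert (by simp [h3]), sum_singleton]
      ring
  have h01 : (0:F3) ≠ 1 := by decide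
  have h02 : (0:F3) ≠ 2 := by decide
  have h12 : (1:F3) ≠ 2 := by decide
  rcases le_total (u 0) (u 1) with a | a <;> rcases le_total (u 1) (u 2) with b | b <;>
    rcases le_total (u 0) (u 2) with c | c
  · exact ⟨2, 1, 0, h12.symm, h02.symm, h01.symm, b, a, key _ _ _ h12.symm h02.symm h01.symm⟩
  · exact ⟨2, 1, 0, h12.symm, h02.symm, h01.symm, b, a, key _ _ _ h12.symm h02.symm h01.symm⟩
  · exact ⟨1, 2, 0, h12, h01.symm, h02.symm, b, c, key _ _ _ h12 h01.symm h02.symm⟩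
  · exact ⟨1, 0, 2, h01.symm, h12, h02, a, c, key _ _ _ h01.symm h12 h02⟩
  · exact ⟨2, 0, 1, h02.symm, h12.symm, h01, c, a, key _ _ _ h02.symm h12.symm h01⟩
  · exact ⟨0, 2, 1, h02, h01, h12.symm, c, b, key _ _ _ h02 h01 h12.symm⟩
  · exact ⟨0, 1, 2, h01, h02, h12, a, b, key _ _ _ h01 h02 h12⟩
  · exact ⟨0, 1, 2, h01, h02, h12, a, b, key _ _ _ h01 h02 h12⟩

noncomputable def U {n : ℕ} (A : Finset (Fin n → F3)) : ℝ := (3 * dn A + 1) / 2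

lemma U_lo {n : ℕ} (A : Finset (Fin n → F3)) : 1 / 2 ≤ U A := by
  have := dn_nonneg A; unfold U; linarith

lemma U_hi {n : ℕ} (A : Finset (Fin n → F3)) : U A ≤ 2 := by
  have := dn_le_one A; unfold U; linarith

lemma U_sec {n : ℕ} (k : Fin (n+1)) (A : Finset (Fin (n+1) → F3)) :
    3 * U A = ∑ c, U (sec k c A) := by
  have := dn_sec k A
  unfold U
  rw [← Finset.sum_div, Finset.sum_add_distrib, ← Finset.mul_sum, ← this]
  simp [F3]
  ring

/-- main numerical inequality -/
lemma numeric {a b c x y z M : ℝ} (hc : 1 / 2 ≤ c) (hbc : c ≤ b) (hab : b ≤ a)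
    (h1 : b * x ≤ M) (h2 : a * y ≤ M) (h3 : a * z ≤ M) :
    (a * b) * ((a + b + c) * (x + y + z)) + M * ((a - b) * (4 * b - a) + (b - c) * (a + 2 * b))
      ≤ 9 * (a * b) * M := by
  have e1 : a * b * (x + y + z) ≤ M * (a + 2 * b) := by
    nlinarith [mul_le_mul_of_nonneg_left h1 (by linarith : 0 ≤ a),
      mul_le_mul_of_nonneg_left h2 (by linarith : 0 ≤ b),
      mul_le_mul_of_nonneg_left h3 (by linarith : 0 ≤ b)]
  have e2 := mul_le_mul_of_nonneg_left e1 (by linarith : 0 ≤ a + b + c)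
  nlinarith

lemma hoffman {n : ℕ} (A B : Finset (Fin n → F3)) (h : Cross A B) : U A * U B ≤ 1 := by
  induction n with
  | zero =>
    have : A = ∅ ∨ B = ∅ := by
      by_contra! hh
      obtain ⟨⟨f, hf⟩, ⟨g, hg⟩⟩ := hh
      obtain ⟨i, _⟩ := h f hf g hg
      exact i.elim0
    have hA := U_hi A
    have hB := U_hi B
    rcases this with h | h
    · have : U A = 1 / 2 := by simp [U, dn, h]
      rw [this]; linarith
    · have : U B = 1 / 2 := by simp [U, dn, h]
      rw [this]; linarith
  | succ n ih =>
    obtain ⟨p, q, r, hpq, hpr, hqr, h1, h2, -, hs⟩ := sort3 (fun c => U (sec 0 c A))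
    have hA := U_sec 0 A
    have hB := U_sec 0 B
    rw [hs] at hA hB
    have i1 := ih _ _ (cross_sec 0 hpq.symm h)
    have i2 := ih _ _ (cross_sec 0 hpq h)
    have i3 := ih _ _ (cross_sec 0 hpr h)
    have lo := U_lo (sec 0 r A)
    have hi := U_hi (sec 0 p A)
    have := numeric lo h2 h1 i1 i2 i3
    rw [← hA, ← hB] at this
    set a := U (sec 0 p A)
    set b := U (sec 0 q A)
    set c := U (sec 0 r A)
    have e1 : 0 ≤ (a - b) * (4 * b - a) := mul_nonneg (by linarith) (by linarith)
    have e2 : 0 ≤ (b - c) * (a + 2 * b) := mul_nonneg (by linarith) (by linarith)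
    have e3 : 0 < a * b := mul_pos (by linarith) (by linarith)
    have e4 : (a * b) * (U A * U B) ≤ (a * b) * 1 := by nlinarith
    exact le_of_mul_le_mul_left e4 e3

lemma hoffman_dk {n : ℕ} {A B : Finset (Fin n → F3)} (h : Cross A B) (k : Fin n) {a b : F3}
    (hab : a ≠ b) : (3 * dk k a A + 1) * (3 * dk k b B + 1) ≤ 4 := by
  cases n with
  | zero => exact k.elim0
  | succ n =>
    have := hoffman _ _ (cross_sec k hab h)
    rw [dk_eq, dk_eq]
    unfold U at this
    linarith

lemma dk_nonneg {n : ℕ} (A : Finset (Fin n → F3)) (k : Fin n) (a : F3) : 0 ≤ dk k a A := by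
  have := dn_nonneg (A.filter (fun x => x k = a))
  unfold dk; linarith

lemma cross_symm {n : ℕ} {A B : Finset (Fin n → F3)} (h : Cross A B) : Cross B A := by
  intro f hf g hg
  obtain ⟨i, hi⟩ := h g hg f hf
  exact ⟨i, hi.symm⟩

lemma sum_split (f : F3 → ℝ) (a : F3) : ∃ b c, a ≠ b ∧ a ≠ c ∧ ∑ x, f x = f a + f b + f c := by
  obtain ⟨p, q, r, hpq, hpr, hqr, -, -, hall, hs⟩ := sort3 f
  rcases hall a with h | h | h
  · exact ⟨q, r, h ▸ hpq, h ▸ hpr, by rw [hs, h]⟩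
  · exact ⟨p, r, h ▸ hpq.symm, h ▸ hqr, by rw [hs, h]; ring⟩
  · exact ⟨p, q, h ▸ hpr.symm, h ▸ hqr.symm, by rw [hs, h]; ring⟩

/-- a set cross-independent to a near-dictator, of density about `1/3`, is a near-dictator -/
lemma transfer {n : ℕ} {A B : Finset (Fin n → F3)} (h : Cross A B) (k : Fin n) (a : F3)
    (hA : 9 / 10 ≤ dk k a A) (hB : 99 / 100 ≤ U B) : 9 / 10 ≤ dk k a B := by
  obtain ⟨b, c, hb, hc, hs⟩ := sum_split (fun x => dk k x B) a
  rw [← dk_sum] at hs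
  have h1 := hoffman_dk h k hb
  have h2 := hoffman_dk h k hc
  have n1 := dk_nonneg B k b
  have n2 := dk_nonneg B k c
  unfold U at hB
  have : dk k b B ≤ 3 / 100 := by nlinarith
  have : dk k c B ≤ 3 / 100 := by nlinarith
  linarith

set_option maxHeartbeats 2000000 in
lemma crude {n : ℕ} (A B : Finset (Fin n → F3)) (h : Cross A B)
    (hu : |U A - 1| ≤ 20 * (U A * U B - (1 - 1 / 20000))) :
    ∃ k a, 9 / 10 ≤ dk k a A ∧ 9 / 10 ≤ dk k a B := by
  induction n with
  | zero =>
    exfalso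
    have hh := hoffman A B h
    have h3 := abs_le.1 hu
    have : U A = 1 / 2 ∨ U A = 2 := by
      rcases A.eq_empty_or_nonempty with e | e
      · left; simp [U, dn, e]
      · right
        have : A.card = 1 := by
          apply le_antisymm
          · have := card_le_univ A
            simpa using this
          · exact e.card_pos
        simp [U, dn, this]; norm_num
    rcases this with e | e <;> rw [e] at h3 hh <;> linarith [h3.1, h3.2]
  | succ n ih =>
    have hAB := hoffman A B h
    obtain ⟨p, q, r, hpq, hpr, hqr, h1, h2, hall, hs⟩ := sort3 (fun c => U (sec 0 c A))
    have hA := U_sec 0 A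
    have hB := U_sec 0 B
    rw [hs] at hA hB
    have hof : ∀ i j, i ≠ j → U (sec 0 i A) * U (sec 0 j B) ≤ 1 :=
      fun i j hij => hoffman _ _ (cross_sec 0 hij h)
    have hex : ∃ i j, i ≠ j ∧ U (sec 0 q A) * U (sec 0 p B) ≤ U (sec 0 i A) * U (sec 0 j B) ∧
        U (sec 0 p A) * U (sec 0 q B) ≤ U (sec 0 i A) * U (sec 0 j B) ∧
        U (sec 0 p A) * U (sec 0 r B) ≤ U (sec 0 i A) * U (sec 0 j B) := by
      rcases le_total (U (sec 0 q A) * U (sec 0 p B)) (U (sec 0 p A) * U (sec 0 q B)) with x | x <;>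
      rcases le_total (U (sec 0 q A) * U (sec 0 p B)) (U (sec 0 p A) * U (sec 0 r B)) with y | y <;>
      rcases le_total (U (sec 0 p A) * U (sec 0 q B)) (U (sec 0 p A) * U (sec 0 r B)) with z | z
      · exact ⟨p, r, hpr, y, z, le_rfl⟩
      · exact ⟨p, q, hpq, x, le_rfl, z⟩
      · exact ⟨p, r, hpr, x.trans z, z, le_rfl⟩
      · exact ⟨p, q, hpq, x, le_rfl, z⟩
      · exact ⟨p, r, hpr, y, z, le_rfl⟩
      · exact ⟨q, p, hpq.symm, le_rfl, x, z.trans x⟩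
      · exact ⟨q, p, hpq.symm, le_rfl, x, y⟩
      · exact ⟨q, p, hpq.symm, le_rfl, x, y⟩
    obtain ⟨i, j, hij, m1, m2, m3⟩ := hex
    have hM := hof i j hij
    have lo := U_lo (sec 0 r A)
    have hi := U_hi (sec 0 p A)
    have hnum := numeric lo h2 h1 m1 m2 m3
    rw [← hA, ← hB] at hnum
    have hu' := abs_le.1 hu
    have hW : 1 - 1 / 20000 ≤ U A * U B := by linarith [abs_nonneg (U A - 1)]
    have hpB := U_lo (sec 0 p B)
    have hqB := U_lo (sec 0 q B)
    have hrB := U_lo (sec 0 r B)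
    have hof1 := hof p q hpq
    have hof2 := hof p r hpr
    have hBhi := U_hi B
    have hBlo := U_lo B
    have hAr : ∀ s, U (sec 0 r A) ≤ U (sec 0 s A) ∧ U (sec 0 s A) ≤ U (sec 0 p A) := by
      intro s
      rcases hall s with e | e | e <;> rw [e] <;> constructor <;> linarith
    have hAi := hAr i
    by_cases hcase : U (sec 0 p A) ≤ 3 * U (sec 0 q A)
    · -- balanced case
      have hdrift : U (sec 0 p A) - U (sec 0 r A) ≤
          20 * (U (sec 0 i A) * U (sec 0 j B) - U A * U B) ∧
          U A * U B ≤ U (sec 0 i A) * U (sec 0 j B) := by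
        generalize U (sec 0 i A) * U (sec 0 j B) = M at *
        generalize U (sec 0 p A) = a at *
        generalize U (sec 0 q A) = b at *
        generalize U (sec 0 r A) = c at *
        have hnum2 : (a * b) * (9 * (U A * U B)) + M * ((a - b) * (4 * b - a) + (b - c) * (a + 2 * b))
            ≤ 9 * (a * b) * M := by linarith
        have hM0 : 0 ≤ M := by nlinarith
        generalize U A * U B = W at *
        have e : b * (a - c) ≤ (a - b) * (4 * b - a) + (b - c) * (a + 2 * b) := by
          nlinarith [mul_nonneg (by linarith : 0 ≤ a - b) (by linarith : 0 ≤ 3 * b - a),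
            mul_nonneg (by linarith : 0 ≤ b - c) (by linarith : 0 ≤ a + b)]
        have e2 := mul_le_mul_of_nonneg_left e hM0
        have e3 : b * (M * (a - c)) ≤ b * (9 * a * (M - W)) := by nlinarith
        have e4 := le_of_mul_le_mul_left e3 (by linarith)
        have e5 : 0 ≤ M * (a - c) := mul_nonneg hM0 (by linarith)
        have hWM : W ≤ M := by
          by_contra hlt
          have : 0 < a * (W - M) := mul_pos (by linarith) (by linarith)
          nlinarith
        refine ⟨?_, hWM⟩
        have e6 : 9 * a * (M - W) ≤ 18 * (M - W) := by nlinarith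
        have e7 : (9 / 10) * (a - c) ≤ M * (a - c) :=
          mul_le_mul_of_nonneg_right (by linarith) (by linarith)
        linarith
      obtain ⟨hd, hWM⟩ := hdrift
      have hIH := ih (sec 0 i A) (sec 0 j B) (cross_sec 0 hij h) (by
        rw [abs_le]; constructor <;> linarith [hAi.1, hAi.2, hu'.1, hu'.2])
      obtain ⟨k, a, ka, kb⟩ := hIH
      have hAall : ∀ s, 998 / 1000 ≤ U (sec 0 s A) := by
        intro s; have := hAr s; linarith
      have hBup : ∀ s, U (sec 0 s B) ≤ 1003 / 1000 := by
        intro s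
        obtain ⟨t, _, ht, -, -⟩ := sum_split (fun _ => 0) s
        have w1 := hof t s ht.symm
        have w2 := U_lo (sec 0 s B)
        have w3 := mul_le_mul_of_nonneg_right (hAall t) (by linarith : 0 ≤ U (sec 0 s B))
        linarith
      have hBge : 9988 / 10000 ≤ U B := by
        have w1 : U A ≤ 1001 / 1000 := by linarith [hu'.2]
        have w2 := mul_le_mul_of_nonneg_right w1 (by linarith : 0 ≤ U B)
        linarith
      have hBall : ∀ s, 99 / 100 ≤ U (sec 0 s B) := by
        intro s
        have x1 := hBup p
        have x2 := hBup q
        have x3 := hBup r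
        rcases hall s with e | e | e <;> rw [e] <;> linarith
      have gB : ∀ s m, s ≠ m → 9 / 10 ≤ dk k a (sec 0 s A) → 9 / 10 ≤ dk k a (sec 0 m B) :=
        fun s m hsm hg => transfer (cross_sec 0 hsm h) k a hg (hBall m)
      have gA : ∀ s m, s ≠ m → 9 / 10 ≤ dk k a (sec 0 s B) → 9 / 10 ≤ dk k a (sec 0 m A) :=
        fun s m hsm hg => transfer (cross_sec 0 hsm (cross_symm h)) k a hg
          (by linarith [hAall m])
      have hl : ∃ l : F3, l ≠ i ∧ l ≠ j := by clear * -; revert i j; decide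
      obtain ⟨l, hli, hlj⟩ := hl
      have allA : ∀ s, 9 / 10 ≤ dk k a (sec 0 s A) := by
        intro s
        by_cases hsj : s = j
        · rw [hsj]
          exact gA l j hlj (gB i l hli.symm ka)
        · exact gA j s (Ne.symm hsj) kb
      have allB : ∀ s, 9 / 10 ≤ dk k a (sec 0 s B) := by
        intro s
        by_cases hsi : s = i
        · rw [hsi]
          exact gB l i hli (gA j l hlj.symm kb)
        · exact gB i s (Ne.symm hsi) ka
      refine ⟨k.succ, a, ?_, ?_⟩
      · have := dk_succ k a A
        rw [hs] at this
        linarith [allA p, allA q, allA r]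
      · have := dk_succ k a B
        rw [hs] at this
        linarith [allB p, allB q, allB r]
    · -- dictator in the first coordinate
      push Not at hcase
      have hres : 37 / 20 ≤ U (sec 0 p A) ∧ 37 / 20 ≤ U (sec 0 p B) := by
        generalize U (sec 0 i A) * U (sec 0 j B) = M at *
        generalize U (sec 0 p A) = a at *
        generalize U (sec 0 q A) = b at *
        generalize U (sec 0 r A) = c at *
        have hnum2 : (a * b) * (9 * (U A * U B)) + M * ((a - b) * (4 * b - a) + (b - c) * (a + 2 * b))
            ≤ 9 * (a * b) * M := by linarith
        have hM0 : 0 ≤ M := by nlinarith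
        have t1 : 0 ≤ (a - b) * (4 * b - a) := mul_nonneg (by linarith) (by linarith)
        have t2 : 0 ≤ (b - c) * (a + 2 * b) := mul_nonneg (by linarith) (by linarith)
        have t3 : 0 < a * b := mul_pos (by linarith) (by linarith)
        have hWM : U A * U B ≤ M := by
          have : (a * b) * (U A * U B) ≤ (a * b) * M := by
            linarith [mul_nonneg hM0 (add_nonneg t1 t2)]
          exact le_of_mul_le_mul_left this t3
        have s1 : M * ((a - b) * (4 * b - a)) ≤ 9 * (a * b) * (1 / 20000) := by
          have : (a * b) * (M - U A * U B) ≤ (a * b) * (1 / 20000) :=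
            mul_le_mul_of_nonneg_left (by linarith) t3.le
          linarith [mul_nonneg hM0 t2]
        have s2 : (9 / 10) * ((a - b) * (4 * b - a)) ≤ M * ((a - b) * (4 * b - a)) :=
          mul_le_mul_of_nonneg_right (by linarith) t1
        have s3 : (2 / 3 * a) * (4 * b - a) ≤ (a - b) * (4 * b - a) :=
          mul_le_mul_of_nonneg_right (by linarith) (by linarith)
        have s4 : a * (6 / 10 * (4 * b - a)) ≤ a * (9 * b / 20000) := by linarith
        have s5 := le_of_mul_le_mul_left s4 (by linarith)
        have s6 : 1999 / 1000 ≤ a := by linarith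
        have s7 : b ≤ 501 / 1000 := by linarith
        refine ⟨by linarith, ?_⟩
        have s8 : U A ≤ 1001 / 1000 := by linarith
        have s9 : 998 / 1000 ≤ U B := by nlinarith
        have s10 : U (sec 0 q B) ≤ 51 / 100 := by nlinarith
        have s11 : U (sec 0 r B) ≤ 51 / 100 := by nlinarith
        linarith
      refine ⟨0, p, ?_, ?_⟩
      · rw [dk_eq]; have := hres.1; unfold U at this; linarith
      · rw [dk_eq]; have := hres.2; unfold U at this; linarith

lemma part1 {n : ℕ} {A : Finset (Fin n → F3)} (h : Cross A A) : dn A ≤ 1 / 3 := by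
  have h1 := hoffman A A h
  have h2 := U_lo A
  have : U A ≤ 1 := by nlinarith
  unfold U at this
  linarith

lemma dn_symmDiff {n : ℕ} (A : Finset (Fin n → F3)) (k : Fin n) (a : F3) :
    dn (symmDiff A (univ.filter (fun f => f k = a))) = 1 / 3 + dn A - 2 / 3 * dk k a A := by
  have e1 : dn (univ.filter (fun f : Fin n → F3 => f k = a)) = 1 / 3 := by
    cases n with
    | zero => exact k.elim0
    | succ n =>
      have := dk_eq k a univ
      have e : sec k a univ = univ := by ext; simp [mem_sec]
      rw [e] at this
      have e' : dn (univ : Finset (Fin n → F3)) = 1 := by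
        unfold dn
        rw [card_univ, card_F3n]; push_cast; field_simp
      rw [e'] at this
      unfold dk at this
      linarith
  have e2 : (symmDiff A (univ.filter (fun f => f k = a))).card + 2 * (A.filter (fun f => f k = a)).card
      = A.card + (univ.filter (fun f : Fin n → F3 => f k = a)).card := by
    have hi : A.filter (fun f => f k = a) = A ∩ univ.filter (fun f => f k = a) := by
      ext; simp
    rw [hi, symmDiff_def, sup_eq_union,
      card_union_of_disjoint (by exact disjoint_sdiff_sdiff)]
    have := card_sdiff_add_card_inter A (univ.filter (fun f : Fin n → F3 => f k = a))
    have := card_sdiff_add_card_inter (univ.filter (fun f : Fin n → F3 => f k = a)) A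
    rw [inter_comm] at this
    omega
  have e3 : ((symmDiff A (univ.filter (fun f => f k = a))).card : ℝ)
      + 2 * ((A.filter (fun f => f k = a)).card : ℝ)
      = A.card + ((univ.filter (fun f : Fin n → F3 => f k = a)).card : ℝ) := by exact_mod_cast e2
  rw [← e1]
  unfold dk dn
  field_simp
  linarith

lemma part3 {n : ℕ} (hn : 1 ≤ n) {A : Finset (Fin n → F3)} (h : Cross A A) (ε : ℝ) (hε : 0 < ε)
    (hA : 1 / 3 - ε ≤ dn A) :
    ∃ (k : Fin n) (a : F3), dn (symmDiff A (univ.filter (fun f => f k = a))) ≤ 100000 * ε := by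
  by_cases hbig : 1 / 100000 ≤ ε
  · refine ⟨⟨0, hn⟩, 0, ?_⟩
    have := dn_le_one (symmDiff A (univ.filter (fun f => f ⟨0, hn⟩ = 0)))
    linarith
  push Not at hbig
  have h1 := part1 h
  obtain ⟨k, a, ha, -⟩ := crude A A h (by
    have e1 : U A ≤ 1 := by unfold U; linarith
    have e2 : 1 - 3 / 2 * ε ≤ U A := by unfold U; linarith
    rw [abs_le]; constructor <;> nlinarith)
  refine ⟨k, a, ?_⟩
  rw [dn_symmDiff]
  obtain ⟨b, c, hb, hc, hs⟩ := sum_split (fun x => dk k x A) a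
  rw [← dk_sum] at hs
  have h1 := hoffman_dk h k hb
  have h2 := hoffman_dk h k hc
  have n1 := dk_nonneg A k b
  have n2 := dk_nonneg A k c
  have m1 : 37 / 10 * dk k b A ≤ 1 - dk k a A := by nlinarith
  have m2 : 37 / 10 * dk k c A ≤ 1 - dk k a A := by nlinarith
  linarith

end Aux


/-- There exists a universal constant `C > 0` such that for every `R ≥ 1`:
if `A ⊆ F₃^R` is an independent set of `K₃^{⊗R}` (no `f, f' ∈ A` differ in every
coordinate) with `|A| = δ·3^R`, then `δ ≤ 1/3`; `δ = 1/3` iff `A` is a dictator;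
and if `δ ≥ 1/3 − ε` with `ε ∈ (0,1/3)` then `A` is `C·ε`-close to a dictator. -/
theorem stmt0 :
    ∃ C : ℝ, 0 < C ∧
      ∀ R : ℕ, 1 ≤ R →
        ∀ (A : Finset (Fin R → F3)) (δ : ℝ),
          (∀ f ∈ A, ∀ f' ∈ A, ∃ i, f i = f' i) →
          (A.card : ℝ) = δ * 3 ^ R →
          (δ ≤ 1 / 3 ∧
            (δ = 1 / 3 ↔
              ∃ (i : Fin R) (a : F3),
                A = Finset.univ.filter (fun f => f i = a)) ∧
            ∀ ε : ℝ, 0 < ε → ε < 1 / 3 → 1 / 3 - ε ≤ δ →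
              ∃ (i : Fin R) (a : F3),
                ((symmDiff A (Finset.univ.filter (fun f => f i = a))).card : ℝ)
                  ≤ C * ε * 3 ^ R) := by
  refine ⟨100000, by norm_num, ?_⟩
  intro R hR A δ hA hδ
  have hpos : (0 : ℝ) < 3 ^ R := by positivity
  have hd : dn A = δ := by
    unfold dn; rw [hδ]; field_simp
  have p3 : ∀ ε : ℝ, 0 < ε → 1 / 3 - ε ≤ δ →
      ∃ (i : Fin R) (a : F3),
        ((symmDiff A (Finset.univ.filter (fun f => f i = a))).card : ℝ) ≤ 100000 * ε * 3 ^ R := by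
    intro ε hε h
    obtain ⟨k, a, hk⟩ := part3 hR hA ε hε (hd ▸ h)
    refine ⟨k, a, ?_⟩
    unfold dn at hk
    rwa [div_le_iff₀ hpos] at hk
  refine ⟨hd ▸ part1 hA, ⟨?_, ?_⟩, fun ε h1 _ h2 => p3 ε h1 h2⟩
  · intro h
    obtain ⟨i, a, hi⟩ := p3 (1 / (200000 * 3 ^ R)) (by positivity) (by
      rw [h]; have : (0 : ℝ) < 1 / (200000 * 3 ^ R) := by positivity
      linarith)
    refine ⟨i, a, ?_⟩
    have e : 100000 * (1 / (200000 * 3 ^ R)) * 3 ^ R = (1 / 2 : ℝ) := by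
      field_simp; norm_num
    rw [e] at hi
    have h0 : (symmDiff A (Finset.univ.filter (fun f => f i = a))).card = 0 := by
      by_contra hne
      have : (1 : ℝ) ≤ ((symmDiff A (Finset.univ.filter (fun f => f i = a))).card : ℝ) := by
        exact_mod_cast Nat.one_le_iff_ne_zero.2 hne
      linarith
    rw [Finset.card_eq_zero] at h0
    exact symmDiff_eq_bot.1 h0
  · rintro ⟨i, a, h⟩
    have e := dn_symmDiff A i a
    have e2 : A.filter (fun f => f i = a) = A := by
      rw [h]; ext; simp
    unfold dk at e
    rw [e2, hd, ← h, symmDiff_self] at e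
    simp [dn] at e
    linarith
end

section
/- For all r, d ∈ ℕ, every independent set A of the graph 𝒢 on vertex set P_{r,2d} satisfies |A| ≤ |P_{r,2d}|/3. -/
open scoped BigOperators

abbrev Pt (r : ℕ) := Fin r → F3
abbrev Fn (r : ℕ) := Pt r → F3

/-- The set of functions `F₃^r → F₃` computed by polynomials of total degree at most `d`
with individual degrees at most `2`. -/
def PolySet (r d : ℕ) : Set (Fn r) :=
  {g | ∃ P : MvPolynomial (Fin r) F3,
        P.totalDegree ≤ d ∧ (∀ i, P.degreeOf i ≤ 2) ∧
        ∀ x, g x = MvPolynomial.eval x P}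

noncomputable def polyFinset (r d : ℕ) : Finset (Fn r) :=
  (Set.toFinite (PolySet r d)).toFinset

/-- Support size `|β|`. -/
def supp {r : ℕ} (β : Fn r) : ℕ := (Finset.univ.filter fun x => β x ≠ 0).card

/-- Dot product `⟨β, f⟩ = Σ_x β(x) f(x)` in `F₃`. -/
def dotF {r : ℕ} (β f : Fn r) : F3 := ∑ x, β x * f x

noncomputable def ω : ℂ := Complex.exp (2 * (Real.pi : ℂ) * Complex.I / 3)

/-- The character `χ_β(f) = ω^{⟨β,f⟩}`. -/
noncomputable def chi {r : ℕ} (β f : Fn r) : ℂ := ω ^ (dotF β f).val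

/-- The dual `S^⊥` of a set of functions. -/
def dualSet (r : ℕ) (S : Set (Fn r)) : Set (Fn r) := {g | ∀ h ∈ S, dotF g h = 0}

/-- `Λ` contains exactly one representative, of minimal support size, from each coset
of `𝔉_r` modulo `P_{r,d}^⊥`. -/
def IsMinRepSet (r d : ℕ) (Λ : Finset (Fn r)) : Prop :=
  (∀ β : Fn r, ∃! β', β' ∈ Λ ∧ β - β' ∈ dualSet r (PolySet r d)) ∧
  (∀ β' ∈ Λ, ∀ γ : Fn r, β' - γ ∈ dualSet r (PolySet r d) → supp β' ≤ supp γ)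

/-- The noise `a·(p² + 1)` (pointwise). -/
def shift {r : ℕ} (p : Fn r) (a : F3) : Fn r := fun x => a * (p x ^ 2 + 1)

/-- Fourier coefficient `Â(β)` of a function on `P_{r,d}`. -/
noncomputable def fourierP (r d : ℕ) (A : Fn r → ℂ) (β : Fn r) : ℂ :=
  (∑ g ∈ polyFinset r d, A g * (starRingEnd ℂ) (chi β g)) / ((polyFinset r d).card : ℂ)

/-- Expectation `E_{f ∈ P_{r,d}}[A(f)]`. -/
noncomputable def expP (r d : ℕ) (A : Fn r → ℝ) : ℝ :=
  (∑ f ∈ polyFinset r d, A f) / ((polyFinset r d).card : ℝ)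

/-- Degree-`k` influence `Inf_x^{≤k}(A)` with respect to a set `Λ` of minimal-support
coset representatives. -/
noncomputable def infP (r d k : ℕ) (Λ : Finset (Fn r)) (A : Fn r → ℝ) (x : Pt r) : ℝ :=
  ∑ β ∈ Λ.filter (fun β => β x ≠ 0 ∧ supp β ≤ k),
    ‖fourierP r d (fun g => (A g : ℂ)) β‖ ^ 2

/-- Every independent set `A` of the graph `𝒢` on vertex set `P_{r,2d}` satisfies
`|A| ≤ |P_{r,2d}|/3`. -/
theorem stmt1 (r d : ℕ) (A : Finset (Fn r)) (hA : ↑A ⊆ PolySet r (2 * d))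
    (hind : ∀ f ∈ A, ∀ p ∈ polyFinset r d, ∀ a : F3, (a = 1 ∨ a = 2) →
      f + shift p a ∉ A) :
    3 * A.card ≤ (polyFinset r (2 * d)).card := by
  have h0 : (0 : Fn r) ∈ polyFinset r d := by
    simp only [polyFinset, Set.Finite.mem_toFinset]
    exact ⟨0, by simp, by simp, by simp⟩
  have hs : ∀ a : F3, shift (0 : Fn r) a = fun _ => a := by
    intro a; funext x; simp [shift]
  have hne : ∀ a : F3, a ≠ 0 → (a = 1 ∨ a = 2) := by decide
  have hinj : Set.InjOn (fun q : Fn r × F3 => q.1 + shift (0 : Fn r) q.2)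
      (↑(A ×ˢ (Finset.univ : Finset F3)) : Set (Fn r × F3)) := by
    rintro ⟨f, a⟩ hf ⟨g, b⟩ hg h
    simp only [Finset.coe_product, Set.mem_prod, Finset.mem_coe] at hf hg
    simp only [hs] at h
    have hfg : g = f + shift (0 : Fn r) (a - b) := by
      rw [hs]
      funext x
      have := congrFun h x
      simp only [Pi.add_apply] at this ⊢
      linear_combination -this
    by_cases hab : a - b = 0
    · have : a = b := sub_eq_zero.mp hab
      subst this
      rw [hab, hs] at hfg
      have : g = f := by rw [hfg]; funext x; simp
      rw [this]
    · exact absurd (hfg ▸ hg.1) (hind f hf.1 0 h0 _ (hne _ hab))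
  have hmap : ∀ q ∈ A ×ˢ (Finset.univ : Finset F3),
      q.1 + shift (0 : Fn r) q.2 ∈ polyFinset r (2 * d) := by
    rintro ⟨f, a⟩ hq
    simp only [Finset.mem_product] at hq
    obtain ⟨P, h1, h2, h3⟩ := hA hq.1
    simp only [polyFinset, Set.Finite.mem_toFinset]
    refine ⟨P + MvPolynomial.C a, ?_, ?_, ?_⟩
    · exact (MvPolynomial.totalDegree_add _ _).trans (by simp [h1])
    · intro i
      exact (MvPolynomial.degreeOf_add_le _ _ _).trans (by simp [h2 i])
    · intro x
      simp [hs, h3 x]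
  have := Finset.card_le_card_of_injOn _ hmap hinj
  rw [Finset.card_product, Finset.card_univ, ZMod.card] at this
  omega
end

section
/- There exists a universal constant d₀ ∈ ℕ such that for all d ≥ d₀ and all r ∈ ℕ, an independent set A of the graph 𝒢 on vertex set P_{r,2d} satisfies |A| = |P_{r,2d}|/3 if and only if A is a dictator, i.e., A = {f ∈ P_{r,2d} : f(x) = b} for some x ∈ F₃^r and b ∈ F₃. -/
open scoped BigOperators

/-! ### Fourier analysis on a finite `F₃`-space -/

noncomputable section

/-- The standard character of `F₃`. -/
def ee : AddChar F3 ℂ := ZMod.stdAddChar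

lemma ee_inj {a : F3} (h : ee a = 1) : a = 0 := by
  have := ZMod.injective_stdAddChar (N := 3)
  apply this
  simpa [ee] using h

section four
variable {V : Type} [AddCommGroup V] [Module F3 V] [Fintype V]

instance finDual : Finite (Module.Dual F3 V) :=
  Finite.of_injective (fun (l : Module.Dual F3 V) => (l : V → F3)) DFunLike.coe_injective

instance : Fintype (Module.Dual F3 V) := Fintype.ofFinite _

/-- Fourier coefficient. -/
def ft (F : V → ℂ) (l : Module.Dual F3 V) : ℂ :=
  (∑ g, F g * ee (-(l g))) / (Fintype.card (Module.Dual F3 V) : ℂ)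

lemma sum_dual [DecidableEq V] (v : V) : ∑ l : Module.Dual F3 V, ee (l v) =
    if v = 0 then (Fintype.card (Module.Dual F3 V) : ℂ) else 0 := by
  classical
  split_ifs with h
  · subst h; simp
  · let ψ : AddChar (Module.Dual F3 V) ℂ :=
      { toFun := fun l => ee (l v)
        map_zero_eq_one' := by simp
        map_add_eq_mul' := by intro a b; simp [AddChar.map_add_eq_mul] }
    have : ∑ l, ψ l = 0 := by
      rw [AddChar.sum_eq_zero_iff_ne_zero]
      intro h0
      apply h
      rw [← Module.forall_dual_apply_eq_zero_iff F3]
      intro l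
      apply ee_inj
      have := DFunLike.congr_fun h0 l
      simpa [ψ] using this
    exact this

lemma sum_prim (l : Module.Dual F3 V) (hl : l ≠ 0) : ∑ v : V, ee (-(l v)) = 0 := by
  classical
  let ψ : AddChar V ℂ :=
      { toFun := fun v => ee (-(l v))
        map_zero_eq_one' := by simp
        map_add_eq_mul' := by
          intro a b
          rw [map_add, neg_add, AddChar.map_add_eq_mul] }
  have : ∑ l, ψ l = 0 := by
    rw [AddChar.sum_eq_zero_iff_ne_zero]
    intro h0
    apply hl
    ext v
    have := DFunLike.congr_fun h0 v
    have h2 : ee (-(l v)) = 1 := by simpa [ψ] using this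
    have := ee_inj h2
    simpa using this
  exact this

lemma card_dual_ne : (Fintype.card (Module.Dual F3 V) : ℂ) ≠ 0 := by
  exact_mod_cast Fintype.card_ne_zero

lemma ft_inv (F : V → ℂ) (f : V) : ∑ l, ft F l * ee (l f) = F f := by
  classical
  have h : ∀ l : Module.Dual F3 V, ft F l * ee (l f) =
      (∑ g, F g * ee (l (f - g))) / (Fintype.card (Module.Dual F3 V) : ℂ) := by
    intro l
    rw [ft, div_mul_eq_mul_div, Finset.sum_mul]
    congr 1
    apply Finset.sum_congr rfl
    intro g _
    rw [mul_assoc, ← AddChar.map_add_eq_mul, map_sub]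
    congr 3
    ring
  rw [Finset.sum_congr rfl (fun l _ => h l), ← Finset.sum_div, Finset.sum_comm,
    div_eq_iff card_dual_ne]
  simp_rw [← Finset.mul_sum, sum_dual, sub_eq_zero]
  simp

lemma ft_conv (F : V → ℂ) (hF : ∀ f, F f * F f = F f) (c : Module.Dual F3 V) :
    ∑ l, ft F l * ft F (c - l) = ft F c := by
  have h : ∀ l : Module.Dual F3 V, ft F l * ft F (c - l) =
      (∑ g, (ft F l * ee (l g)) * (F g * ee (-(c g)))) /
        (Fintype.card (Module.Dual F3 V) : ℂ) := by
    intro l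
    conv_lhs => rw [ft.eq_def F (c - l)]
    rw [← mul_div_assoc, Finset.mul_sum]
    congr 1
    apply Finset.sum_congr rfl
    intro g _
    have : ee (-((c - l) g)) = ee (l g) * ee (-(c g)) := by
      rw [← AddChar.map_add_eq_mul, LinearMap.sub_apply]
      congr 1
      ring
    rw [this]
    ring
  rw [Finset.sum_congr rfl (fun l _ => h l), ← Finset.sum_div, Finset.sum_comm, ft]
  congr 1
  apply Finset.sum_congr rfl
  intro g _
  rw [← Finset.sum_mul, ft_inv, ← mul_assoc, hF]

/-- A function summing to one on all lines of direction `q` has no Fourier mass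
on nonzero characters vanishing at `q`. -/
lemma ft_zero (F : V → ℂ) (q : V) (h : ∀ f, F f + F (f + q) + F (f + 2 • q) = 1)
    (l : Module.Dual F3 V) (hl : l ≠ 0) (hq : l q = 0) : ft F l = 0 := by
  have key : ∀ t : V, l t = 0 → ∑ g, F (g + t) * ee (-(l g)) = ∑ g, F g * ee (-(l g)) := by
    intro t ht
    rw [← Equiv.sum_comp (Equiv.addRight t) (fun g => F g * ee (-(l g)))]
    simp [ht]
  have h3 : 3 * ∑ g, F g * ee (-(l g)) = 0 := by
    calc 3 * ∑ g, F g * ee (-(l g))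
        = ∑ g, F g * ee (-(l g)) + ∑ g, F (g + q) * ee (-(l g))
            + ∑ g, F (g + 2 • q) * ee (-(l g)) := by
          rw [key q hq, key (2 • q) (by rw [map_nsmul, hq]; simp)]; ring
      _ = ∑ g, ee (-(l g)) := by
          rw [← Finset.sum_add_distrib, ← Finset.sum_add_distrib]
          apply Finset.sum_congr rfl
          intro g _
          rw [← add_mul, ← add_mul, h, one_mul]
      _ = 0 := sum_prim l hl
  have : ∑ g, F g * ee (-(l g)) = 0 := by simpa using h3
  rw [ft, this, zero_div]

end four

end

/-! ### Polynomial functions -/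

/-- Exponent reduction. -/
def red (e : ℕ) : ℕ := if e = 0 then 0 else if e % 2 = 1 then 1 else 2

lemma red_le (e : ℕ) : red e ≤ e := by unfold red; split_ifs <;> omega
lemma red_zero : red 0 = 0 := by simp [red]
lemma red_le2 (e : ℕ) : red e ≤ 2 := by unfold red; split_ifs <;> omega
lemma pow_odd3 (x : F3) (k : ℕ) : x ^ (2 * k + 1) = x := by
  induction k with
  | zero => simp
  | succ k ih =>
    have : x ^ (2 * (k + 1) + 1) = x ^ (2 * k + 1) * x ^ 2 := by ring
    rw [this, ih]; clear this ih; revert x; decide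
lemma pow_red (x : F3) (e : ℕ) : x ^ red e = x ^ e := by
  unfold red
  split_ifs with h h'
  · simp [h]
  · obtain ⟨k, rfl⟩ : ∃ k, e = 2 * k + 1 := ⟨e / 2, by omega⟩
    rw [pow_odd3, pow_one]
  · obtain ⟨k, rfl⟩ : ∃ k, e = (2 * k + 1) + 1 := ⟨e / 2 - 1, by omega⟩
    rw [pow_succ _ (2 * k + 1), pow_odd3, pow_two]

open MvPolynomial in
lemma mem_poly {r d : ℕ} {g : Fn r} : g ∈ PolySet r d ↔
    ∃ P : MvPolynomial (Fin r) F3, P.totalDegree ≤ d ∧ ∀ x, g x = eval x P := by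
  constructor
  · rintro ⟨P, h1, _, h3⟩; exact ⟨P, h1, h3⟩
  rintro ⟨P, h1, h3⟩
  refine ⟨∑ s ∈ P.support, monomial (s.mapRange red red_zero) (P.coeff s), ?_, ?_, ?_⟩
  · refine totalDegree_finsetSum_le ?_
    intro s hs
    refine (totalDegree_monomial_le _ _).trans (le_trans ?_ ((le_totalDegree hs).trans h1))
    rw [Finsupp.sum_mapRange_index (by intro _; rfl)]
    exact Finset.sum_le_sum (fun i _ => red_le _)
  · intro i
    refine (degreeOf_sum_le _ _ _).trans (Finset.sup_le ?_)
    intro s hs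
    rw [degreeOf_monomial_eq _ _ (mem_support_iff.1 hs)]
    simp [red_le2]
  · intro x
    conv_lhs => rw [h3, P.as_sum, map_sum]
    rw [map_sum]
    apply Finset.sum_congr rfl
    intro s _
    rw [eval_monomial, eval_monomial, Finsupp.prod_mapRange_index (by simp)]
    congr 1
    apply Finset.prod_congr rfl
    intro i _
    exact (pow_red _ _).symm

/-- The space of polynomial functions as a submodule. -/
def polyV (r d : ℕ) : Submodule F3 (Fn r) where
  carrier := PolySet r d
  add_mem' := by
    intro a b ha hb
    rw [mem_poly] at *
    obtain ⟨P, hP, hP'⟩ := ha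
    obtain ⟨Q, hQ, hQ'⟩ := hb
    exact ⟨P + Q, (MvPolynomial.totalDegree_add _ _).trans (max_le hP hQ),
      fun x => by simp [hP', hQ']⟩
  zero_mem' := by
    rw [mem_poly]
    exact ⟨0, by simp, by simp⟩
  smul_mem' := by
    intro c a ha
    rw [mem_poly] at *
    obtain ⟨P, hP, hP'⟩ := ha
    exact ⟨c • P, (MvPolynomial.totalDegree_smul_le _ _).trans hP,
      fun x => by simp [hP', MvPolynomial.smul_eval]⟩

lemma mem_polyV {r d : ℕ} {f : Fn r} : f ∈ polyV r d ↔ f ∈ PolySet r d := Iff.rfl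

lemma mul_mem_polyV {r d e : ℕ} {f g : Fn r} (hf : f ∈ polyV r d) (hg : g ∈ polyV r e) :
    f * g ∈ polyV r (d + e) := by
  rw [mem_polyV, mem_poly] at *
  obtain ⟨P, hP, hP'⟩ := hf
  obtain ⟨Q, hQ, hQ'⟩ := hg
  exact ⟨P * Q, (MvPolynomial.totalDegree_mul _ _).trans (add_le_add hP hQ),
    fun x => by simp [hP', hQ']⟩

lemma polyV_mono {r d e : ℕ} (h : d ≤ e) {f : Fn r} (hf : f ∈ polyV r d) : f ∈ polyV r e := by
  rw [mem_polyV, mem_poly] at *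
  obtain ⟨P, hP, hP'⟩ := hf
  exact ⟨P, hP.trans h, hP'⟩

lemma one_mem_polyV {r d : ℕ} : (1 : Fn r) ∈ polyV r d := by
  rw [mem_polyV, mem_poly]
  exact ⟨1, by simp, by simp⟩

lemma X_mem_polyV {r : ℕ} (i : Fin r) : (fun x : Pt r => x i) ∈ polyV r 1 := by
  rw [mem_polyV, mem_poly]
  exact ⟨MvPolynomial.X i, by simp, by simp⟩

/-- Monomial function of a list of variables. -/
def mon {r : ℕ} (l : List (Fin r)) : Fn r := fun x => (l.map x).prod

lemma mon_cons {r : ℕ} (i : Fin r) (l : List (Fin r)) :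
    mon (i :: l) = (fun x : Pt r => x i) * mon l := by
  ext x; simp [mon]

lemma mon_append {r : ℕ} (k l : List (Fin r)) : mon (k ++ l) = mon k * mon l := by
  ext x; simp [mon]

lemma mon_mem {r : ℕ} (l : List (Fin r)) : mon l ∈ polyV r l.length := by
  induction l with
  | nil =>
    have : mon ([] : List (Fin r)) = 1 := by ext x; simp [mon]
    rw [this]; exact one_mem_polyV
  | cons i l ih =>
    rw [mon_cons, List.length_cons, add_comm]
    exact mul_mem_polyV (X_mem_polyV i) ih

lemma eval_mon {r : ℕ} (x : Pt r) (s : Fin r →₀ ℕ) (a : F3) :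
    MvPolynomial.eval x (MvPolynomial.monomial s a) = a * mon s.toMultiset.toList x := by
  rw [MvPolynomial.eval_monomial, mon, ← Multiset.prod_coe, ← Multiset.map_coe,
    Multiset.coe_toList]
  congr 1
  rw [Finsupp.toMultiset_map, Finsupp.prod_toMultiset, Finsupp.prod_mapDomain_index]
  · intro b; simp
  · intro b m n; exact pow_add _ _ _

/-- Rigidity: a functional that never vanishes on `p² + 1` is a scaled evaluation. -/
lemma rigid {r d : ℕ} (hd : 1 ≤ d) (m : Fn r →ₗ[F3] F3)
    (h : ∀ p ∈ polyV r d, m (p * p + 1) ≠ 0) :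
    ∃ (c : F3) (y : Pt r), ∀ f ∈ polyV r (2 * d), m f = c * f y := by
  set c := m 1 with hc
  have hc0 : c ≠ 0 := by simpa using h 0 (zero_mem _)
  have hcc : c * c = 1 := by revert hc0; generalize c = c; revert c; decide
  have hQ : ∀ p ∈ polyV r d, m p = 0 → m (p * p) = 0 := by
    intro p hp hp0
    have h1 := h p hp
    have h2 := h (p + 1) (add_mem hp one_mem_polyV)
    have e : (p + 1) * (p + 1) + 1 = p * p + p + p + 1 + 1 := by ring
    rw [e] at h2
    simp only [map_add, hp0, ← hc] at h1 h2
    revert h1 h2 hc0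
    generalize m (p * p) = u
    generalize c = c
    revert u c
    decide
  have hB : ∀ p ∈ polyV r d, ∀ q ∈ polyV r d, m p = 0 → m q = 0 → m (p * q) = 0 := by
    intro p hp q hq hp0 hq0
    have h1 := hQ p hp hp0
    have h2 := hQ q hq hq0
    have h3 := hQ (p + q) (add_mem hp hq) (by rw [map_add, hp0, hq0, add_zero])
    have e : (p + q) * (p + q) = p * p + p * q + p * q + q * q := by ring
    rw [e] at h3
    simp only [map_add, h1, h2] at h3
    revert h3
    generalize m (p * q) = u
    revert u
    decide
  have hmul : ∀ p ∈ polyV r d, ∀ q ∈ polyV r d, c * m (p * q) = m p * m q := by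
    intro p hp q hq
    have hz : ∀ p : Fn r, m (p - (c * m p) • (1 : Fn r)) = 0 := by
      intro p
      rw [map_sub, map_smul, ← hc, smul_eq_mul]
      linear_combination (- m p) * hcc
    have hb := hB (p - (c * m p) • (1 : Fn r))
      (sub_mem hp (Submodule.smul_mem _ _ one_mem_polyV))
      (q - (c * m q) • (1 : Fn r))
      (sub_mem hq (Submodule.smul_mem _ _ one_mem_polyV)) (hz p) (hz q)
    have e : (p - (c * m p) • (1 : Fn r)) * (q - (c * m q) • (1 : Fn r)) =
        p * q - (c * m q) • p - (c * m p) • q + (c * m p * (c * m q)) • (1 : Fn r) := by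
      ext x
      simp
      ring
    rw [e] at hb
    simp only [map_add, map_sub, map_smul, smul_eq_mul, ← hc] at hb
    linear_combination c * hb + (2 * m p * m q - m p * m q * (c * c + 1)) * hcc
  let y : Pt r := fun i => c * m (fun x => x i)
  have hmon : ∀ l : List (Fin r), l.length ≤ d → c * m (mon l) = mon l y := by
    intro l
    induction l with
    | nil =>
      intro _
      have : mon ([] : List (Fin r)) = 1 := by ext x; simp [mon]
      rw [this, ← hc, hcc]; rfl
    | cons i l ih =>
      intro hl
      rw [List.length_cons] at hl
      rw [mon_cons, hmul _ (polyV_mono hd (X_mem_polyV i)) _ (polyV_mono (by omega) (mon_mem l)),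
        Pi.mul_apply, ← ih (by omega)]
      simp only [y]
      linear_combination (- (m (fun x => x i) * m (mon l))) * hcc
  have hmon2 : ∀ l : List (Fin r), l.length ≤ 2 * d → c * m (mon l) = mon l y := by
    intro l hl
    rw [← List.take_append_drop d l, mon_append, Pi.mul_apply]
    have h1 : (l.take d).length ≤ d := by simp
    have h2 : (l.drop d).length ≤ d := by simp; omega
    rw [hmul _ (polyV_mono h1 (mon_mem _)) _ (polyV_mono h2 (mon_mem _)),
      ← hmon _ h1, ← hmon _ h2]
    linear_combination (- (m (mon (l.take d)) * m (mon (l.drop d)))) * hcc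
  refine ⟨c, y, ?_⟩
  intro f hf
  rw [mem_polyV, mem_poly] at hf
  obtain ⟨P, hP, hf⟩ := hf
  have hf' : f = ∑ s ∈ P.support, P.coeff s • mon s.toMultiset.toList := by
    ext x
    rw [hf, P.as_sum, map_sum, ← P.as_sum, Finset.sum_apply]
    apply Finset.sum_congr rfl
    intro s _
    rw [eval_mon, Pi.smul_apply, smul_eq_mul]
  rw [hf', map_sum, Finset.sum_apply, Finset.mul_sum]
  apply Finset.sum_congr rfl
  intro s hs
  rw [map_smul, Pi.smul_apply, smul_eq_mul, smul_eq_mul, ← hmon2]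
  · linear_combination (- (P.coeff s * m (mon s.toMultiset.toList))) * hcc
  · rw [Multiset.length_toList, Finsupp.card_toMultiset]
    exact (MvPolynomial.le_totalDegree hs).trans hP

lemma exists_sep {r : ℕ} (y z : Pt r) : ∃ f ∈ polyV r 1, f y = 1 ∧ (z ≠ y → f z = 0) := by
  by_cases h : z = y
  · exact ⟨1, one_mem_polyV, rfl, fun h' => absurd h h'⟩
  · obtain ⟨i, hi⟩ := Function.ne_iff.1 h
    refine ⟨(y i - z i)⁻¹ • ((fun x : Pt r => x i) - z i • (1 : Fn r)),
      Submodule.smul_mem _ _ (sub_mem (X_mem_polyV i) (Submodule.smul_mem _ _ one_mem_polyV)),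
      ?_, ?_⟩
    · have : y i - z i ≠ 0 := sub_ne_zero.2 (Ne.symm hi)
      simp [this]
    · intro _; simp

lemma exists_ind {r d : ℕ} (hd : 2 ≤ d) (y u v w : Pt r) :
    ∃ f ∈ polyV r (2 * d), f y = 1 ∧ (u ≠ y → f u = 0) ∧ (v ≠ y → f v = 0) ∧
      (w ≠ y → f w = 0) := by
  obtain ⟨f, hf, hf1, hf2⟩ := exists_sep y u
  obtain ⟨g, hg, hg1, hg2⟩ := exists_sep y v
  obtain ⟨k, hk, hk1, hk2⟩ := exists_sep y w
  refine ⟨f * g * k, polyV_mono (by omega) (mul_mem_polyV (mul_mem_polyV hf hg) hk), ?_, ?_, ?_, ?_⟩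
  · simp [hf1, hg1, hk1]
  · intro h; simp [hf2 h]
  · intro h; simp [hg2 h]
  · intro h; simp [hk2 h]

lemma indep {r d : ℕ} (hd : 2 ≤ d) (u v y z : Pt r) (a b c e : F3) (hyz : y ≠ z)
    (hc : c ≠ 0) (he : e ≠ 0)
    (h : ∀ f ∈ polyV r (2 * d), a * f u + b * f v = c * f y + e * f z) :
    (u = y ∧ v = z ∧ a = c ∧ b = e) ∨ (u = z ∧ v = y ∧ a = e ∧ b = c) := by
  obtain ⟨f, hf, f1, f2, f3, f4⟩ := exists_ind hd y z u v
  obtain ⟨g, hg, g1, g2, g3, g4⟩ := exists_ind hd z y u v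
  have h1 := h f hf
  have h2 := h g hg
  rw [f1, f2 hyz.symm] at h1
  rw [g1, g2 hyz] at h2
  by_cases uy : u = y
  · subst uy
    by_cases vz : v = z
    · subst vz
      rw [f1, f2 hyz.symm] at h1
      rw [g1, g2 hyz] at h2
      left
      simp_all
    · rw [g2 hyz, g4 vz] at h2
      simp at h2
      exact absurd h2.symm he
  · by_cases vy : v = y
    · subst vy
      by_cases uz : u = z
      · subst uz
        right
        simp_all
      · rw [g2 hyz, g3 uz] at h2
        simp at h2
        exact absurd h2.symm he
    · rw [f3 uy, f4 vy] at h1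
      simp at h1
      exact absurd h1.symm hc

noncomputable instance fintypePolyV (r d : ℕ) : Fintype (polyV r d) := Fintype.ofFinite _

lemma card_polyV (r d : ℕ) : Fintype.card (polyV r d) = (polyFinset r d).card := by
  rw [← Nat.card_eq_fintype_card, polyFinset, ← Set.ncard_eq_toFinset_card]
  rfl

/-- Natural-number indicator of `A`. -/
noncomputable def ind {r d : ℕ} (A : Finset (Fn r)) (f : polyV r d) : ℕ :=
  if (f : Fn r) ∈ A then 1 else 0

lemma sum_ind {r d : ℕ} (A : Finset (Fn r)) (hA : (A : Set (Fn r)) ⊆ PolySet r d) :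
    ∑ f : polyV r d, ind A f = A.card := by
  classical
  unfold ind
  rw [Finset.sum_boole]
  simp only [Nat.cast_id]
  apply Finset.card_bij (fun (f : polyV r d) _ => (f : Fn r))
  · intro a ha; simpa using ha
  · intro a _ b _ h; exact Subtype.ext h
  · intro b hb; exact ⟨⟨b, hA hb⟩, by simpa using hb, rfl⟩

lemma sum_tri {r d : ℕ} (A : Finset (Fn r)) (hA : (A : Set (Fn r)) ⊆ PolySet r d)
    (q : polyV r d) :
    ∑ f : polyV r d, (ind A f + ind A (f + q) + ind A (f + 2 • q)) = 3 * A.card := by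
  have h : ∀ t : polyV r d, ∑ f : polyV r d, ind A (f + t) = ∑ f : polyV r d, ind A f :=
    fun t => Equiv.sum_comp (Equiv.addRight t) (fun f => ind A f)
  rw [Finset.sum_add_distrib, Finset.sum_add_distrib, h, h, sum_ind A hA]
  ring

lemma dict_card {r d : ℕ} (A : Finset (Fn r)) (x : Pt r) (b : F3)
    (h : (A : Set (Fn r)) = {f | f ∈ PolySet r d ∧ f x = b}) :
    3 * A.card = (polyFinset r d).card := by
  classical
  have hm : ∀ f : polyV r d, (f : Fn r) ∈ A ↔ (f : Fn r) x = b := by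
    intro f
    rw [← Finset.mem_coe, h]
    exact ⟨fun h => h.2, fun h => ⟨f.2, h⟩⟩
  rw [← sum_tri A (by rw [h]; exact fun f hf => hf.1) ⟨1, one_mem_polyV⟩, ← card_polyV,
    Fintype.card_eq_sum_ones]
  apply Finset.sum_congr rfl
  intro f _
  unfold ind
  simp only [hm]
  simp only [two_nsmul, Submodule.coe_add, Pi.add_apply, Pi.one_apply]
  have fact : ∀ t b : F3, (((if t = b then 1 else 0) + if t + 1 = b then 1 else 0) +
      if t + (1 + 1) = b then 1 else 0) = 1 := by decide
  convert fact ((f : Fn r) x) b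

lemma tri_eq {r d : ℕ} (A : Finset (Fn r)) (hA : (A : Set (Fn r)) ⊆ PolySet r (2 * d))
    (hI : ∀ f ∈ A, ∀ p ∈ polyFinset r d, ∀ a : F3, (a = 1 ∨ a = 2) → f + shift p a ∉ A)
    (hc : 3 * A.card = (polyFinset r (2 * d)).card)
    (q : polyV r (2 * d)) (p : Fn r) (hp : p ∈ polyV r d) (hq : (q : Fn r) = p * p + 1)
    (f : polyV r (2 * d)) :
    ind A f + ind A (f + q) + ind A (f + 2 • q) = 1 := by
  have hp' : p ∈ polyFinset r d := by
    rw [polyFinset, Set.Finite.mem_toFinset]; exact hp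
  have s1 : shift p 1 = (q : Fn r) := by
    rw [hq]; ext x; simp [shift]; ring
  have s2 : shift p 2 = (2 • q : Fn r) := by
    rw [hq]; ext x; simp [shift]; ring
  have hle : ∀ f : polyV r (2 * d), ind A f + ind A (f + q) + ind A (f + 2 • q) ≤ 1 := by
    intro f
    have h1 : (f : Fn r) ∈ A → ((f + q : polyV r (2 * d)) : Fn r) ∉ A := by
      intro hf
      have := hI _ hf p hp' 1 (Or.inl rfl)
      rwa [s1] at this
    have h2 : (f : Fn r) ∈ A → ((f + 2 • q : polyV r (2 * d)) : Fn r) ∉ A := by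
      intro hf
      have := hI _ hf p hp' 2 (Or.inr rfl)
      rwa [s2] at this
    have h3 : ((f + q : polyV r (2 * d)) : Fn r) ∈ A →
        ((f + 2 • q : polyV r (2 * d)) : Fn r) ∉ A := by
      intro hf
      have := hI _ hf p hp' 1 (Or.inl rfl)
      rw [s1] at this
      have e : f + 2 • q = f + q + q := by rw [two_nsmul, add_assoc]
      rw [e]
      exact this
    unfold ind
    split_ifs <;> first | omega | (exfalso; tauto)
  by_contra hne
  have hlt : ∑ f : polyV r (2 * d), (ind A f + ind A (f + q) + ind A (f + 2 • q)) <
      ∑ f : polyV r (2 * d), 1 :=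
    Finset.sum_lt_sum (fun g _ => hle g) ⟨f, Finset.mem_univ _, lt_of_le_of_ne (hle f) hne⟩
  rw [sum_tri A hA, ← Fintype.card_eq_sum_ones, card_polyV, hc] at hlt
  exact lt_irrefl _ hlt

/-- Scaled evaluation functional. -/
def evl {r d : ℕ} (c : F3) (y : Pt r) : Module.Dual F3 (polyV r d) where
  toFun f := c * (f : Fn r) y
  map_add' f g := by simp [mul_add]
  map_smul' a f := by simp; ring

lemma evl_apply {r d : ℕ} (c : F3) (y : Pt r) (f : polyV r d) :
    evl c y f = c * (f : Fn r) y := rfl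

lemma evl_zero {r d : ℕ} (y : Pt r) : (evl 0 y : Module.Dual F3 (polyV r d)) = 0 := by
  ext f; simp [evl_apply]

lemma dict_of_card {r d : ℕ} (hd : 2 ≤ d) (A : Finset (Fn r))
    (hA : (A : Set (Fn r)) ⊆ PolySet r (2 * d))
    (hI : ∀ f ∈ A, ∀ p ∈ polyFinset r d, ∀ a : F3, (a = 1 ∨ a = 2) → f + shift p a ∉ A)
    (hc : 3 * A.card = (polyFinset r (2 * d)).card) :
    ∃ (x : Pt r) (b : F3), (A : Set (Fn r)) = {f | f ∈ PolySet r (2 * d) ∧ f x = b} := by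
  classical
  let F : polyV r (2 * d) → ℂ := fun f => (ind A f : ℂ)
  have hFF : ∀ f, F f * F f = F f := by
    intro f; simp only [F, ind]; split_ifs <;> simp
  have htri := tri_eq A hA hI hc
  have hsq : ∀ p ∈ polyV r d, p * p + 1 ∈ polyV r (2 * d) := by
    intro p hp
    rw [two_mul]
    exact add_mem (mul_mem_polyV hp hp) one_mem_polyV
  -- Fourier support consists of scaled evaluations
  have hsupp : ∀ l, ft F l ≠ 0 → ∃ c y, l = evl c y := by
    intro l hl
    by_cases l0 : l = 0
    · exact ⟨0, 0, by rw [l0, evl_zero]⟩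
    obtain ⟨m, hm⟩ := LinearMap.exists_extend l
    have hm' : ∀ f : polyV r (2 * d), m f = l f := fun f => by rw [← hm]; rfl
    obtain ⟨c, y, hcy⟩ := rigid (d := d) (by omega) m (by
      intro p hp h0
      apply hl
      apply ft_zero F ⟨p * p + 1, hsq p hp⟩ _ l l0
      · rw [← hm']; exact h0
      · intro f
        have := htri ⟨p * p + 1, hsq p hp⟩ p hp rfl f
        simp only [F]
        exact_mod_cast this)
    refine ⟨c, y, ?_⟩
    ext f
    rw [← hm', hcy _ f.2, evl_apply]
  -- at most one point
  have huniq : ∀ c e y z, c ≠ 0 → e ≠ 0 → ft F (evl c y) ≠ 0 → ft F (evl e z) ≠ 0 → y = z := by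
    intro c e y z hc0 he0 h1 h2
    by_contra hyz
    set γ : Module.Dual F3 (polyV r (2 * d)) := evl c y + evl e z with hγ
    have key : ∀ a b u v, (evl a u + evl b v : Module.Dual F3 (polyV r (2 * d))) = γ →
        (u = y ∧ v = z ∧ a = c ∧ b = e) ∨ (u = z ∧ v = y ∧ a = e ∧ b = c) := by
      intro a b u v h
      apply indep hd u v y z a b c e hyz hc0 he0
      intro f hf
      have := DFunLike.congr_fun h ⟨f, hf⟩
      simpa [hγ, evl_apply] using this
    have hγ0 : ft F γ = 0 := by
      by_contra h
      obtain ⟨a, u, hau⟩ := hsupp _ h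
      have := key a 0 u u (by rw [evl_zero, add_zero, hau])
      rcases this with ⟨_, _, _, h⟩ | ⟨_, _, _, h⟩
      · exact he0 h.symm
      · exact hc0 h.symm
    have hne : (evl c y : Module.Dual F3 (polyV r (2 * d))) ≠ evl e z := by
      intro h
      have h3 := key (c + c) 0 y y (by
        rw [evl_zero, add_zero, hγ, ← h]; ext f
        simp only [evl_apply, LinearMap.add_apply]; ring)
      rcases h3 with ⟨_, _, _, h⟩ | ⟨_, _, _, h⟩
      · exact he0 h.symm
      · exact hc0 h.symm
    have hconv := ft_conv F hFF γ
    rw [hγ0, ← Finset.sum_subset (Finset.subset_univ {evl c y, evl e z}),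
      Finset.sum_pair hne] at hconv
    · have e1 : γ - evl c y = evl e z := by rw [hγ]; abel
      have e2 : γ - evl e z = evl c y := by rw [hγ]; abel
      rw [e1, e2] at hconv
      have : 2 * (ft F (evl c y) * ft F (evl e z)) = 0 := by
        linear_combination hconv
      simp [h1, h2] at this
    · intro l _ hl
      by_contra hne0
      obtain ⟨a, u, hau⟩ := hsupp l (left_ne_zero_of_mul hne0)
      obtain ⟨b, v, hbv⟩ := hsupp (γ - l) (right_ne_zero_of_mul hne0)
      apply hl
      have := key a b u v (by rw [← hau, ← hbv]; abel)
      rw [hau]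
      rcases this with ⟨rfl, _, rfl, _⟩ | ⟨rfl, _, rfl, _⟩ <;> simp
  have hy : ∃ y, ∀ l, ft F l ≠ 0 → ∃ c, l = evl c y := by
    by_cases hex : ∃ c y, c ≠ 0 ∧ ft F (evl c y) ≠ 0
    · obtain ⟨c, y, hc0, hcy⟩ := hex
      refine ⟨y, fun l hl => ?_⟩
      obtain ⟨e, z, rfl⟩ := hsupp l hl
      by_cases he : e = 0
      · exact ⟨0, by rw [he, evl_zero, evl_zero]⟩
      · rw [huniq c e y z hc0 he hcy hl]
        exact ⟨e, rfl⟩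
    · push Not at hex
      refine ⟨0, fun l hl => ?_⟩
      obtain ⟨e, z, rfl⟩ := hsupp l hl
      by_cases he : e = 0
      · exact ⟨0, by rw [he, evl_zero, evl_zero]⟩
      · exact absurd (hex e z he) hl
  obtain ⟨y, hy⟩ := hy
  have hdep : ∀ f g : polyV r (2 * d), (f : Fn r) y = (g : Fn r) y → ind A f = ind A g := by
    intro f g hfg
    have : F f = F g := by
      rw [← ft_inv F f, ← ft_inv F g]
      apply Finset.sum_congr rfl
      intro l _
      by_cases hl : ft F l = 0
      · rw [hl, zero_mul, zero_mul]
      · obtain ⟨c, hl'⟩ := hy l hl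
        rw [hl', evl_apply, evl_apply, hfg]
    simpa [F] using this
  -- constants
  let k : F3 → polyV r (2 * d) := fun t => ⟨t • (1 : Fn r), Submodule.smul_mem _ _ one_mem_polyV⟩
  have hk : ∀ t, ((k t : polyV r (2 * d)) : Fn r) y = t := by intro t; simp [k]
  have hsum := htri (k 1) 0 (zero_mem _) (by simp [k]) (k 0)
  have k1 : k 0 + k 1 = k 1 := by ext x; simp [k]
  have k2 : k 0 + 2 • k 1 = k 2 := by ext x; simp [k]
  rw [k1, k2] at hsum
  have hb : ∃ b, ∀ t, ind A (k t) = 1 ↔ t = b := by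
    have all : ∀ t : F3, t = 0 ∨ t = 1 ∨ t = 2 := by decide
    have n01 : (0 : F3) ≠ 1 := by decide
    have n02 : (0 : F3) ≠ 2 := by decide
    have n12 : (1 : F3) ≠ 2 := by decide
    have hh : ind A (k 0) = 1 ∧ ind A (k 1) = 0 ∧ ind A (k 2) = 0 ∨
      ind A (k 0) = 0 ∧ ind A (k 1) = 1 ∧ ind A (k 2) = 0 ∨
      ind A (k 0) = 0 ∧ ind A (k 1) = 0 ∧ ind A (k 2) = 1 := by omega
    rcases hh with ⟨h0, h1, h2⟩ | ⟨h0, h1, h2⟩ | ⟨h0, h1, h2⟩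
    · refine ⟨0, fun t => ?_⟩
      rcases all t with rfl | rfl | rfl <;> simp [h0, h1, h2, n01.symm, n02.symm]
    · refine ⟨1, fun t => ?_⟩
      rcases all t with rfl | rfl | rfl <;> simp [h0, h1, h2, n01, n12.symm]
    · refine ⟨2, fun t => ?_⟩
      rcases all t with rfl | rfl | rfl <;> simp [h0, h1, h2, n02, n12]
  obtain ⟨b, hb⟩ := hb
  have hmem : ∀ f : polyV r (2 * d), (f : Fn r) ∈ A ↔ (f : Fn r) y = b := by
    intro f
    rw [← hb, ← hdep f (k ((f : Fn r) y)) (hk _).symm]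
    simp [ind]
  refine ⟨y, b, ?_⟩
  ext f
  constructor
  · intro hf
    exact ⟨hA hf, (hmem ⟨f, hA hf⟩).1 hf⟩
  · rintro ⟨hf, hfb⟩
    exact (hmem ⟨f, hf⟩).2 hfb

/-- There is a universal `d₀` such that for all `d ≥ d₀` and all `r`, an independent set
`A` of the graph `𝒢` on `P_{r,2d}` has size exactly `|P_{r,2d}|/3` iff `A` is a dictator. -/
theorem stmt2 :
    ∃ d₀ : ℕ, ∀ d : ℕ, d₀ ≤ d → ∀ r : ℕ,
      ∀ A : Finset (Fn r), ↑A ⊆ PolySet r (2 * d) →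
        (∀ f ∈ A, ∀ p ∈ polyFinset r d, ∀ a : F3, (a = 1 ∨ a = 2) →
          f + shift p a ∉ A) →
        (3 * A.card = (polyFinset r (2 * d)).card ↔
          ∃ (x : Pt r) (b : F3),
            (A : Set (Fn r)) = {f | f ∈ PolySet r (2 * d) ∧ f x = b}) := by
  refine ⟨2, fun d hd r A hA hI => ⟨dict_of_card hd A hA hI, ?_⟩⟩
  rintro ⟨x, b, h⟩
  exact dict_card A x b h
end

section
/- There exist universal constants d₀ ∈ ℕ, ε₀ > 0 and C > 0 such that for all d ≥ d₀, all r ∈ ℕ and all ε ∈ (0, ε₀): if A is an independent set of the graph 𝒢 on vertex set P_{r,2d} with |A| ≥ (1/3 − ε)·|P_{r,2d}|, then there exists a dictator A' = {f ∈ P_{r,2d} : f(x) = b} (for some x ∈ F₃^r, b ∈ F₃) with |A Δ A'| ≤ C·ε·|P_{r,2d}| (Δ denoting symmetric difference of sets). -/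
open scoped BigOperators

set_option linter.unusedSectionVars false
namespace FK
section abs
variable {V P : Type*} [AddCommGroup V] [Fintype V]

noncomputable def E (X : V → ℝ) : ℝ := (∑ f, X f) / (Fintype.card V : ℝ)

lemma cardpos : (0:ℝ) < (Fintype.card V : ℝ) := by
  exact_mod_cast Fintype.card_pos

lemma E_add (X Y : V → ℝ) : E (fun f => X f + Y f) = E X + E Y := by
  simp [E, Finset.sum_add_distrib, add_div]
lemma E_sub (X Y : V → ℝ) : E (fun f => X f - Y f) = E X - E Y := by
  simp [E, Finset.sum_sub_distrib, sub_div]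
lemma E_smul (c : ℝ) (X : V → ℝ) : E (fun f => c * X f) = c * E X := by
  simp [E, ← Finset.mul_sum, mul_div_assoc]
lemma E_const (c : ℝ) : E (fun _ : V => c) = c := by
  have := cardpos (V := V)
  simp [E]
lemma E_sum {ι : Type*} (s : Finset ι) (X : ι → V → ℝ) :
    E (fun f => ∑ i ∈ s, X i f) = ∑ i ∈ s, E (X i) := by
  unfold E
  rw [Finset.sum_comm, Finset.sum_div]
lemma E_mono {X Y : V → ℝ} (h : ∀ f, X f ≤ Y f) : E X ≤ E Y := by
  unfold E
  have := cardpos (V := V)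
  gcongr with f
  exact h f
lemma E_nonneg {X : V → ℝ} (h : ∀ f, 0 ≤ X f) : 0 ≤ E X := by
  unfold E
  have := cardpos (V := V)
  have := Finset.sum_nonneg (fun f (_ : f ∈ Finset.univ) => h f)
  positivity
lemma E_shift (p : V) (X : V → ℝ) : E (fun f => X (f + p)) = E X := by
  unfold E
  congr 1
  exact Equiv.sum_comp (Equiv.addRight p) X
lemma E_cs (X Y : V → ℝ) : (E (fun f => X f * Y f))^2 ≤ E (fun f => X f ^ 2) * E (fun f => Y f ^ 2) := by
  unfold E
  have := cardpos (V := V)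
  have h := Finset.sum_mul_sq_le_sq_mul_sq Finset.univ X Y
  rw [div_pow, div_mul_div_comm, ← pow_two]
  gcongr

variable [DecidableEq P] (ev : V →+ (P → ZMod 3))

def Loc (x : P) (k : ℕ) : Submodule ℝ (V → ℝ) :=
  Submodule.span ℝ {Φ | ∃ Y : Finset P, Y.card ≤ k ∧ x ∉ Y ∧
    ∀ f g, (∀ y ∈ Y, ev f y = ev g y) → Φ f = Φ g}

lemma Loc_mul (x : P) (j k : ℕ) {X Y : V → ℝ} (hX : X ∈ Loc ev x j) (hY : Y ∈ Loc ev x k) :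
    X * Y ∈ Loc ev x (j + k) := by
  have h := Submodule.mul_mem_mul hX hY
  unfold Loc at h
  rw [Submodule.span_mul_span] at h
  refine Submodule.span_mono ?_ h
  rintro _ ⟨a, ⟨S, hS, hxS, ha⟩, b, ⟨T, hT, hxT, hb⟩, rfl⟩
  refine ⟨S ∪ T, (Finset.card_union_le _ _).trans (by omega), by simp [hxS, hxT], ?_⟩
  intro f g hfg
  simp only [Pi.mul_apply]
  rw [ha f g (fun y hy => hfg y (by simp [hy])), hb f g (fun y hy => hfg y (by simp [hy]))]

lemma Loc_const (x : P) (k : ℕ) (c : ℝ) : (fun _ => c) ∈ Loc ev x k :=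
  Submodule.subset_span ⟨∅, by simp, by simp, by simp⟩

lemma Loc_pow (x : P) (j : ℕ) {X : V → ℝ} (hX : X ∈ Loc ev x 1) : X ^ j ∈ Loc ev x j := by
  induction j with
  | zero => rw [pow_zero]; exact Loc_const ev x 0 1
  | succ n ih => rw [pow_succ]; exact Loc_mul ev x n 1 ih hX

def Sep : Prop := ∀ x : P, ∀ Y : Finset P, Y.card ≤ 3 → x ∉ Y →
  ∃ p : V, ev p x = 1 ∧ ∀ y ∈ Y, ev p y = 0

lemma sum3 {M : Type*} [AddCommMonoid M] (ψ : ZMod 3 → M) : ∑ b, ψ b = ψ 0 + ψ 1 + ψ 2 := Fin.sum_univ_three ψ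

lemma sum3s (ψ : ZMod 3 → ℝ) (a : ZMod 3) : ψ a + ψ (a+1) + ψ (a+2) = ∑ b, ψ b := by
  have h := (Equiv.sum_comp (Equiv.addLeft a) ψ)
  rw [← h, sum3]
  simp

lemma indep (hs : Sep ev) (x : P) {Φ : V → ℝ} (hΦ : Φ ∈ Loc ev x 3) (ψ : ZMod 3 → ℝ) :
    E (fun f => Φ f * ψ (ev f x)) = E Φ * ((∑ b, ψ b) / 3) := by
  unfold Loc at hΦ
  induction hΦ using Submodule.span_induction with
  | mem Φ h =>
    obtain ⟨Y, hY, hx, hd⟩ := h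
    obtain ⟨p, hp1, hp0⟩ := hs x Y hY hx
    have h1 := E_shift p (fun f => Φ f * ψ (ev f x))
    have h2 := E_shift (p + p) (fun f => Φ f * ψ (ev f x))
    have e1 : ∀ f, Φ (f + p) = Φ f := fun f => hd _ _ (fun y hy => by simp [hp0 y hy])
    have e2 : ∀ f, Φ (f + (p + p)) = Φ f := fun f => hd _ _ (fun y hy => by simp [hp0 y hy])
    simp only [e1, e2, map_add, Pi.add_apply, hp1] at h1 h2
    have h3 : E (fun f => Φ f * (∑ b, ψ b)) = E Φ * (∑ b, ψ b) := by
      simp_rw [mul_comm _ (∑ b, ψ b)]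
      rw [E_smul]
    have h4 : E (fun f => Φ f * (∑ b, ψ b)) = E (fun f => Φ f * ψ (ev f x)) + E (fun f => Φ f * ψ (ev f x + 1))
        + E (fun f => Φ f * ψ (ev f x + (1+1))) := by
      rw [← E_add, ← E_add]
      congr 1
      funext f
      rw [← sum3s ψ (ev f x)]
      have : (1 + 1 : ZMod 3) = 2 := by decide
      rw [this]; ring
    linarith
  | zero =>
    have := E_const (V := V) 0
    simp only [Pi.zero_apply, zero_mul, this]
    rw [show (0 : V → ℝ) = fun _ => 0 from rfl, this]; ring
  | add X Y _ _ hX hY =>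
    rw [show (X + Y) = fun f => X f + Y f from rfl, E_add, add_mul, ← hX, ← hY, ← E_add]
    congr 1; funext f; ring
  | smul c X _ hX =>
    rw [show (c • X) = fun f => c * X f from rfl, E_smul, mul_assoc, ← hX, ← E_smul]
    congr 1; funext f; ring

lemma indep1 (hs : Sep ev) (x : P) (ψ : ZMod 3 → ℝ) :
    E (fun f => ψ (ev f x)) = ((∑ b, ψ b) / 3) := by
  have := indep ev hs x (Loc_const ev x 3 1) ψ
  simpa [E_const] using this

lemma S_loc (k : P → ZMod 3 → ℝ) (c : ℝ) (x : P) (T : Finset P) (hx : x ∉ T) :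
    (fun f => c + ∑ y ∈ T, k y (ev f y)) ∈ Loc ev x 1 := by
  have : (fun f => c + ∑ y ∈ T, k y (ev f y)) = (fun _ => c) + ∑ y ∈ T, fun f => k y (ev f y) := by
    funext f; simp
  rw [this]
  refine Submodule.add_mem _ (Loc_const ev x 1 c) (Submodule.sum_mem _ fun y hy => ?_)
  refine Submodule.subset_span ⟨{y}, by simp, ?_, ?_⟩
  · simp only [Finset.mem_singleton]; rintro rfl; exact hx hy
  · intro f g h; simp [h y (by simp)]

lemma Loc_mono (x : P) {j k : ℕ} (h : j ≤ k) : Loc ev x j ≤ Loc ev x k := by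
  refine Submodule.span_mono ?_
  rintro Φ ⟨Y, hY, h2⟩
  exact ⟨Y, hY.trans h, h2⟩

lemma S_indep (hs : Sep ev) (k : P → ZMod 3 → ℝ) (c : ℝ) (x : P) (T : Finset P) (hx : x ∉ T)
    (j : ℕ) (hj : j ≤ 3) (ψ : ZMod 3 → ℝ) :
    E (fun f => (c + ∑ y ∈ T, k y (ev f y))^j * ψ (ev f x)) =
      E (fun f => (c + ∑ y ∈ T, k y (ev f y))^j) * ((∑ b, ψ b) / 3) :=
  indep ev hs x (Loc_mono ev x hj (Loc_pow ev x j (S_loc ev k c x T hx))) ψ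

/-- first and second moments -/
lemma mom1 (hs : Sep ev) (k : P → ZMod 3 → ℝ) (hk : ∀ x, ∑ b, k x b = 0) (c : ℝ) (T : Finset P) :
    E (fun f => c + ∑ y ∈ T, k y (ev f y)) = c := by
  rw [E_add, E_const, E_sum]
  simp [indep1 ev hs, hk]

lemma mom2 (hs : Sep ev) (k : P → ZMod 3 → ℝ) (hk : ∀ x, ∑ b, k x b = 0) (c : ℝ) (T : Finset P) :
    E (fun f => (c + ∑ y ∈ T, k y (ev f y))^2) = c^2 + ∑ y ∈ T, (∑ b, k y b ^2)/3 := by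
  induction T using Finset.induction_on with
  | empty => simp [E_const]
  | insert x T hx ih =>
    have h1 := S_indep ev hs k c x T hx 1 (by norm_num) (k x)
    have h2 := indep1 ev hs x (fun b => k x b ^ 2)
    rw [hk] at h1
    simp only [Finset.sum_insert hx]
    have : E (fun f => (c + (k x (ev f x) + ∑ y ∈ T, k y (ev f y)))^2) =
      E (fun f => (c + ∑ y ∈ T, k y (ev f y))^2) +
       2 * E (fun f => (c + ∑ y ∈ T, k y (ev f y))^1 * k x (ev f x)) + E (fun f => k x (ev f x) ^ 2) := by
      rw [← E_smul, ← E_add, ← E_add]; congr 1; funext f; ring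
    rw [this, h1, h2, ih]; ring

lemma mom3 (hs : Sep ev) (k : P → ZMod 3 → ℝ) (hk : ∀ x, ∑ b, k x b = 0) (T : Finset P) :
    E (fun f => (∑ y ∈ T, k y (ev f y))^3) = ∑ y ∈ T, (∑ b, k y b ^3)/3 := by
  induction T using Finset.induction_on with
  | empty => simp [E_const]
  | insert x T hx ih =>
    have h1 := S_indep ev hs k 0 x T hx 1 (by norm_num) (fun b => k x b ^2)
    have h1' := mom1 ev hs k hk 0 T
    have h2 := S_indep ev hs k 0 x T hx 2 (by norm_num) (fun b => k x b)
    have h3 := indep1 ev hs x (fun b => k x b ^ 3)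
    rw [hk] at h2
    simp only [zero_add, pow_one] at h1 h1' h2
    rw [h1'] at h1
    simp only [Finset.sum_insert hx]
    have : E (fun f => (k x (ev f x) + ∑ y ∈ T, k y (ev f y))^3) =
      E (fun f => (∑ y ∈ T, k y (ev f y))^3) +
       3 * E (fun f => (∑ y ∈ T, k y (ev f y))^2 * k x (ev f x)) + 
       3 * E (fun f => (∑ y ∈ T, k y (ev f y)) * k x (ev f x)^2) +  E (fun f => k x (ev f x) ^ 3) := by
      rw [← E_smul, ← E_smul, ← E_add, ← E_add, ← E_add]; congr 1; funext f; ring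
    rw [this, h1, h2, h3, ih]; ring

lemma kbound (a b c : ℝ) (_h : a + b + c = 0) :
    (a^4 + b^4 + c^4)/3 ≤ 3 * ((a^2+b^2+c^2)/3)^2 := by
  nlinarith [mul_nonneg (sq_nonneg a) (sq_nonneg b), mul_nonneg (sq_nonneg a) (sq_nonneg c),
    mul_nonneg (sq_nonneg c) (sq_nonneg b)]

lemma mom4 (hs : Sep ev) (k : P → ZMod 3 → ℝ) (hk : ∀ x, ∑ b, k x b = 0) (c : ℝ) (T : Finset P) :
    E (fun f => (c + ∑ y ∈ T, k y (ev f y))^4) ≤ 9 * (E (fun f => (c + ∑ y ∈ T, k y (ev f y))^2))^2 := by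
  induction T using Finset.induction_on with
  | empty => simp [E_const]; nlinarith [sq_nonneg (c^2)]
  | insert x T hx ih =>
    have m2 := mom2 ev hs k hk c (insert x T)
    have m2' := mom2 ev hs k hk c T
    have h2 := S_indep ev hs k c x T hx 2 (by norm_num) (fun b => k x b ^2)
    have h3 := S_indep ev hs k c x T hx 3 (by norm_num) (fun b => k x b)
    have h4 := indep1 ev hs x (fun b => k x b ^ 4)
    have hkb := kbound (k x 0) (k x 1) (k x 2) (by rw [← hk x, sum3])
    rw [hk] at h3
    rw [m2, Finset.sum_insert hx]
    rw [m2'] at ih h2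
    set a := c^2 + ∑ y ∈ T, (∑ b, k y b ^2)/3 with ha
    have ha0 : 0 ≤ a := by positivity
    set w := (∑ b, k x b ^2)/3 with hw
    have hw0 : 0 ≤ w := by positivity
    have hk4 : E (fun f => k x (ev f x) ^ 4) ≤ 3 * w^2 := by
      rw [h4, hw, sum3, sum3]; exact hkb
    simp only [Finset.sum_insert hx]
    have : E (fun f => (c + (k x (ev f x) + ∑ y ∈ T, k y (ev f y)))^4) ≤
      E (fun f => (c + ∑ y ∈ T, k y (ev f y))^4) +
       4 * E (fun f => (c + ∑ y ∈ T, k y (ev f y))^3 * k x (ev f x)) + 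
       8 * E (fun f => (c + ∑ y ∈ T, k y (ev f y))^2 * k x (ev f x)^2) +
       3 * E (fun f => k x (ev f x) ^ 4) := by
      rw [← E_smul, ← E_smul, ← E_smul, ← E_add, ← E_add, ← E_add]
      refine E_mono fun f => ?_
      set s := ∑ y ∈ T, k y (ev f y)
      set t := k x (ev f x)
      nlinarith [mul_nonneg (sq_nonneg t) (sq_nonneg (c + s - t))]
    have e : c^2 + (w + ∑ y ∈ T, (∑ b, k y b ^2)/3) = a + w := by rw [ha]; ring
    rw [e]
    nlinarith [mul_nonneg ha0 hw0]

lemma cubic (a b c M : ℝ) (h : a + b + c = 0) (ha : a ≤ M) (hb : b ≤ M) (hc : c ≤ M) :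
    (a^3+b^3+c^3)/3 ≤ M/2 * ((a^2+b^2+c^2)/3) := by
  have hM : 0 ≤ M := by linarith
  have hc' : c = -a-b := by linarith
  have key : ∀ a b c : ℝ, a + b + c = 0 → a ≤ M → 0 ≤ a → a*b*c ≤ M/2 * ((a^2+b^2+c^2)/3) := by
    intro a b c h h1 h2
    have : c = -a-b := by linarith
    subst this
    have : M/2 * ((a^2+b^2+(-a-b)^2)/3) ≥ a/2 * ((a^2+b^2+(-a-b)^2)/3) := by gcongr
    nlinarith [mul_nonneg h2 (sq_nonneg (a+2*b))]
  have e : (a^3+b^3+c^3)/3 = a*b*c := by subst hc'; ring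
  rw [e]
  by_cases h1 : 0 ≤ a
  · exact key a b c h ha h1
  by_cases h2 : 0 ≤ b
  · have := key b a c (by linarith) hb h2
    nlinarith
  · have := key c a b (by linarith) hc (by linarith)
    nlinarith


variable [Fintype P]

lemma orth (hs : Sep ev) (F : V → ℝ) (v : P → ZMod 3 → ℝ) (μ : ℝ) (hμ : E F = μ)
    (hv : ∀ x b, v x b = 3 * E (fun f => F f * (if ev f x = b then 1 else 0)))
    (hv0 : ∀ x, ∑ b, (v x b - μ) = 0)
    (c : ℝ) (k : P → ZMod 3 → ℝ) :
    E (fun f => (μ + ∑ y, (v y (ev f y) - μ) - F f) * (c + ∑ y, k y (ev f y))) = 0 := by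
  have h0 : E (fun f => (μ + ∑ y, (v y (ev f y) - μ) - F f)) = 0 := by
    rw [E_sub, hμ, mom1 ev hs (fun y b => v y b - μ) hv0]; ring
  have h1 : ∀ x, E (fun f => (μ + ∑ y, (v y (ev f y) - μ) - F f) * k x (ev f x)) = 0 := by
    intro x
    have a1 := S_indep ev hs (fun y b => v y b - μ) μ x (Finset.univ.erase x) (by simp) 1 (by norm_num) (k x)
    simp only [pow_one] at a1
    rw [mom1 ev hs (fun y b => v y b - μ) hv0] at a1
    have a2 := indep1 ev hs x (fun b => (v x b - μ) * k x b)
    have a3 : E (fun f => F f * k x (ev f x)) = (∑ b, v x b * k x b) / 3 := by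
      have : (fun f => F f * k x (ev f x)) =
          fun f => ∑ b, k x b * (F f * (if ev f x = b then 1 else 0)) := by
        funext f
        simp [mul_comm]
      rw [this, E_sum, Finset.sum_div]
      refine Finset.sum_congr rfl fun b _ => ?_
      rw [E_smul, hv]; ring
    have a4 : E (fun f => (μ + ∑ y, (v y (ev f y) - μ) - F f) * k x (ev f x)) =
      E (fun f => (μ + ∑ y ∈ Finset.univ.erase x, (v y (ev f y) - μ)) * k x (ev f x)) +
      E (fun f => (v x (ev f x) - μ) * k x (ev f x)) - E (fun f => F f * k x (ev f x)) := by
      rw [← E_add, ← E_sub]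
      congr 1; funext f
      rw [← Finset.add_sum_erase Finset.univ _ (Finset.mem_univ x)]; ring
    rw [a4, a1, a2, a3]
    simp only [sub_mul, Finset.sum_sub_distrib, ← Finset.mul_sum]
    ring
  have : E (fun f => (μ + ∑ y, (v y (ev f y) - μ) - F f) * (c + ∑ y, k y (ev f y))) =
     c * E (fun f => (μ + ∑ y, (v y (ev f y) - μ) - F f)) +
     ∑ x, E (fun f => (μ + ∑ y, (v y (ev f y) - μ) - F f) * k x (ev f x)) := by
    rw [← E_sum, ← E_smul, ← E_add]
    congr 1; funext f; rw [mul_add, Finset.mul_sum]; ring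
  rw [this, h0, Finset.sum_congr rfl fun x _ => h1 x]; simp

set_option maxHeartbeats 2000000 in
theorem fkn (hs : Sep ev) (F : V → ℝ) (hF : ∀ f, F f = 0 ∨ F f = 1)
    (v : P → ZMod 3 → ℝ) (μ ε : ℝ) (hμ : E F = μ)
    (hv : ∀ x b, v x b = 3 * E (fun f => F f * (if ev f x = b then 1 else 0)))
    (hε : ε < 1/1000000000) (hμε : 1/3 - ε ≤ μ)
    (hspec : 8 * μ^2 - 2 * μ ≤ ∑ x, (∑ b, (v x b - μ)^2)/3) :
    ∃ x b, E (fun f => (F f - (if ev f x = b then 1 else 0))^2) ≤ 6 * ε := by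
  have hv0 : ∀ x, ∑ b, (v x b - μ) = 0 := by
    intro x
    simp only [hv, Finset.sum_sub_distrib, ← Finset.mul_sum]
    rw [← E_sum]
    simp [hμ]
  set h : P → ZMod 3 → ℝ := fun x b => v x b - μ with hh
  have hF2 : ∀ f, F f ^ 2 = F f := fun f => by rcases hF f with h | h <;> rw [h] <;> norm_num
  set G : V → ℝ := fun f => ∑ y, h y (ev f y) with hG
  set e : V → ℝ := fun f => μ + G f - F f with he
  set δ := E (fun f => e f ^2) with hδ
  have hδ0 : 0 ≤ δ := E_nonneg fun f => sq_nonneg _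
  have horth : ∀ (c : ℝ) (k : P → ZMod 3 → ℝ), E (fun f => e f * (c + ∑ y, k y (ev f y))) = 0 :=
    orth ev hs F v μ hμ hv hv0
  set VV := ∑ x, (∑ b, (h x b)^2)/3 with hVV
  have hG2 : E (fun f => G f ^2) = VV := by
    have := mom2 ev hs h hv0 0 Finset.univ
    simpa using this
  have hG3 : E (fun f => G f ^3) = ∑ x, (∑ b, (h x b)^3)/3 := mom3 ev hs h hv0 Finset.univ
  have hG4 : E (fun f => G f ^4) ≤ 9 * VV^2 := by
    have := mom4 ev hs h hv0 0 Finset.univ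
    simp only [zero_add] at this
    rw [← hG2]; exact this
  have hvar : E (fun f => (F f - μ)^2) = μ - μ^2 := by
    have : (fun f => (F f - μ)^2) = fun f => (1 - 2*μ) * F f + μ^2 := by
      funext f; linear_combination hF2 f
    rw [this, E_add, E_smul, E_const, hμ]; ring
  have hpar : μ - μ^2 = VV + δ := by
    rw [← hvar, ← hG2, hδ]
    have h0 := horth 0 h
    have : (fun f => (F f - μ)^2) = fun f => G f ^2 + e f ^2 - 2 * (e f * (0 + ∑ y, h y (ev f y))) := by
      funext f; simp only [he, hG]; ring
    rw [this, E_sub, E_add, E_smul, h0]; ring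
  have hVV0 : 0 ≤ VV := by positivity
  have hμ0 : 1/4 ≤ μ := by linarith
  have hμ1 : μ ≤ 1/3 := by nlinarith
  have hδε : δ ≤ 3 * ε := by nlinarith
  -- third moment
  have hm3 : E (fun f => (F f - μ)^3) = μ * (1-μ) * (1 - 2*μ) := by
    have : (fun f => (F f - μ)^3) = fun f => (1 - 3*μ+3*μ^2) * F f + -μ^3 := by
      funext f; rcases hF f with h | h <;> rw [h] <;> ring
    rw [this, E_add, E_smul, E_const, hμ]; ring
  have hdiff : (E (fun f => G f ^3) - μ * (1-μ) * (1 - 2*μ))^2 ≤ 9 * δ := by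
    rw [← hm3, ← E_sub]
    have : (fun f => G f ^3 - (F f - μ)^3) = fun f => e f * (G f^2 + G f * (F f - μ) + (F f - μ)^2) := by
      funext f; simp only [he]; ring
    rw [this]
    refine (E_cs _ _).trans ?_
    have h1 : E (fun f => (G f^2 + G f * (F f - μ) + (F f - μ)^2)^2) ≤ E (fun f => 9/2 * G f ^4 + 9/2) := by
      refine E_mono fun f => ?_
      have hu : (F f - μ)^2 ≤ 1 := by
        rcases hF f with h | h <;> rw [h] <;> nlinarith
      set u := F f - μ
      have a1 : 0 ≤ G f^2 + G f * u + u^2 := by nlinarith [sq_nonneg (G f + u), sq_nonneg (G f), sq_nonneg u]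
      have a2 : G f^2 + G f * u + u^2 ≤ 3/2 * (G f ^2 + 1) := by nlinarith [sq_nonneg (G f - u)]
      calc _ ≤ (3/2 * (G f ^2 + 1))^2 := by gcongr
        _ ≤ _ := by nlinarith [sq_nonneg (G f ^2 - 1)]
    rw [E_add, E_smul, E_const] at h1
    have h2 : VV ≤ 1/4 := by nlinarith [sq_nonneg (μ - 1/2)]
    have h3 : E (fun f => (G f^2 + G f * (F f - μ) + (F f - μ)^2)^2) ≤ 9 := by nlinarith
    rw [← hδ]
    nlinarith
  have hex : ∃ x b, 2/3 - 1/200 ≤ h x b := by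
    by_contra hcon
    push Not at hcon
    have : E (fun f => G f ^3) ≤ (2/3 - 1/200)/2 * VV := by
      rw [hG3, hVV, Finset.mul_sum]
      refine Finset.sum_le_sum fun x _ => ?_
      rw [sum3, sum3]
      exact cubic _ _ _ _ (by rw [← hv0 x, sum3]) (hcon x 0).le (hcon x 1).le (hcon x 2).le
    have h2 : VV ≤ μ * (1 - μ) := by nlinarith
    have h3 : 3/16 ≤ μ * (1-μ) := by nlinarith
    have h5 : μ * (1-μ) * (1/3) ≤ μ * (1-μ) * (1 - 2*μ) := by
      apply mul_le_mul_of_nonneg_left <;> linarith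
    have h4 : 3/6400 ≤ μ * (1-μ) * (1 - 2*μ) - E (fun f => G f ^3) := by linarith
    have h6 : (3/6400 : ℝ)^2 ≤ (μ * (1-μ) * (1 - 2*μ) - E (fun f => G f ^3))^2 :=
      pow_le_pow_left₀ (by norm_num) h4 2
    have h7 : (μ * (1-μ) * (1 - 2*μ) - E (fun f => G f ^3))^2
      = (E (fun f => G f ^3) - μ * (1-μ) * (1 - 2*μ))^2 := by ring
    rw [h7] at h6
    linarith
  obtain ⟨x, b, hxb⟩ := hex
  refine ⟨x, b, ?_⟩
  set B : V → ℝ := fun f => if ev f x = b then 1 else 0 with hB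
  have hB2 : ∀ f, B f ^ 2 = B f := fun f => by simp only [hB]; split_ifs <;> norm_num
  have hBm : E B = 1/3 := by
    have := indep1 ev hs x (fun t => if t = b then 1 else 0)
    rw [hB, this]; simp
  set θ := E (fun f => (F f - B f)^2) with hθ
  have hθ0 : 0 ≤ θ := E_nonneg fun f => sq_nonneg _
  have hθ1 : θ ≤ 1/145 := by
    have : (fun f => (F f - B f)^2) = fun f => F f + B f - 2 * (F f * B f) := by
      funext f; linear_combination hF2 f + hB2 f
    rw [hθ, this, E_sub, E_add, E_smul, hμ, hBm]
    have := hv x b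
    simp only [hh] at hxb
    have h' : v x b = 3 * E (fun f => F f * B f) := this
    linarith
  -- linear part of F - B
  set k : P → ZMod 3 → ℝ := fun y t => h y t - (if y = x then ((if t = b then 1 else 0) - 1/3) else 0) with hk
  have hk0 : ∀ y, ∑ t, k y t = 0 := by
    intro y
    have hv0' : ∀ x, ∑ b, h x b = 0 := hv0
    simp only [hk, Finset.sum_sub_distrib, hv0']
    by_cases hy : y = x
    · simp [hy]
    · simp [hy]
  set L : V → ℝ := fun f => (μ - 1/3) + ∑ y, k y (ev f y) with hL
  have hLe : ∀ f, L f = e f + (F f - B f) := by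
    intro f
    simp only [hL, hk, Finset.sum_sub_distrib, he, hG, hB]
    simp
    ring
  have hL4 : E (fun f => L f ^4) ≤ 9 * (E (fun f => L f ^2))^2 := mom4 ev hs k hk0 _ _
  have heL : E (fun f => e f * L f) = 0 := horth _ _
  have hθL : θ = E (fun f => L f ^2) + δ := by
    rw [hθ, hδ]
    have : (fun f => (F f - B f)^2) = fun f => L f ^2 + e f ^2 - 2 * (e f * L f) := by
      funext f; rw [hLe]; ring
    rw [this, E_sub, E_add, E_smul, heL]; ring
  have huL : E (fun f => (F f - B f) * L f) = θ - δ := by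
    have : (fun f => (F f - B f) * L f) = fun f => L f ^2 - e f * L f := by
      funext f; rw [hLe]; ring
    rw [this, E_sub, heL]; linarith
  have hu4 : ∀ f, ((F f - B f)^2)^2 = (F f - B f)^2 := by
    intro f
    have h1 := hF2 f
    have h2 := hB2 f
    rcases hF f with h | h <;> simp only [h, hB] <;> split_ifs <;> norm_num
  set X := E (fun f => (F f - B f)^2 * L f ^2) with hX
  have c1 : (θ - δ)^2 ≤ θ * X := by
    rw [← huL]
    have hc := E_cs (fun f => (F f - B f)) (fun f => (F f - B f)* L f)
    have e1 : (fun f => (F f - B f) * ((F f - B f)* L f)) = fun f => (F f - B f)^2 * L f := by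
      funext f; ring
    have e2 : (fun f => ((F f - B f)* L f)^2) = fun f => (F f - B f)^2 * L f ^2 := by
      funext f; ring
    have hc' := E_cs (fun f => (F f - B f)) (fun f => (if F f - B f = 0 then 0 else L f))
    have e3 : (fun f => (F f - B f) * (if F f - B f = 0 then 0 else L f)) = fun f => (F f - B f) * L f := by
      funext f; split_ifs with h <;> simp [h]
    have e4 : (fun f => (if F f - B f = 0 then 0 else L f)^2) = fun f => (F f - B f)^2 * L f ^2 := by
      funext f; split_ifs with h
      · simp [h]
      · have := hu4 f
        have h2 : (F f - B f)^2 ≠ 0 := pow_ne_zero 2 h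
        have : (F f - B f)^2 = 1 := by
          apply mul_left_cancel₀ h2
          linear_combination this
        rw [this, one_mul]
    rw [e3, e4] at hc'
    exact hc'
  have c2 : X^2 ≤ θ * (9 * θ^2) := by
    have hc := E_cs (fun f => (F f - B f)^2) (fun f => L f ^2)
    simp only [hu4] at hc
    have e1 : (fun f => (L f ^2)^2) = fun f => L f ^4 := by funext f; ring
    rw [e1] at hc
    refine hc.trans ?_
    have hL0 : 0 ≤ E (fun f => L f ^2) := E_nonneg fun f => sq_nonneg _
    have : E (fun f => L f ^4) ≤ 9 * θ^2 := hL4.trans (by nlinarith)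
    exact mul_le_mul_of_nonneg_left this hθ0
  by_contra hcon
  push Not at hcon
  have hθp : 0 < θ := by linarith
  have hhalf : θ/2 ≤ θ - δ := by linarith
  have d1 : θ^2/4 ≤ θ * X := by nlinarith
  have d2 : θ/4 ≤ X := by
    by_contra hn
    push Not at hn
    nlinarith
  have d3 : θ^2/16 ≤ 9 * θ^3 := by nlinarith
  have d4 : 1/144 ≤ θ := by
    by_contra hn
    push Not at hn
    nlinarith [pow_pos hθp 2]
  linarith
end abs

section poly
variable {r : ℕ}

def Bs (r : ℕ) : Submodule F3 (Fn r) :=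
  Submodule.span F3 (insert 1 (Set.range fun (i : Fin r) (x : Pt r) => x i))

def PS (r d : ℕ) : Submodule F3 (Fn r) := Bs r ^ d

lemma one_mem_Bs : (1 : Fn r) ∈ Bs r := Submodule.subset_span (by simp)
lemma X_mem_Bs (i : Fin r) : (fun x : Pt r => x i) ∈ Bs r := Submodule.subset_span (by simp)
lemma one_le_Bs : (1 : Submodule F3 (Fn r)) ≤ Bs r := by
  rw [Submodule.one_le]; exact one_mem_Bs
lemma PS_mono {a b : ℕ} (h : a ≤ b) : PS r a ≤ PS r b := pow_le_pow_right' one_le_Bs h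
lemma PS_one_mem (d : ℕ) : (1 : Fn r) ∈ PS r d := by
  have := PS_mono (r := r) (Nat.zero_le d)
  apply this
  rw [PS, pow_zero]
  exact Submodule.one_le.mp le_rfl
lemma PS_mul {a b : ℕ} {p q : Fn r} (hp : p ∈ PS r a) (hq : q ∈ PS r b) : p * q ∈ PS r (a + b) := by
  rw [PS, pow_add]; exact Submodule.mul_mem_mul hp hq
lemma PS_one : PS r 1 = Bs r := pow_one _
lemma PS_zero_mem {p : Fn r} (hp : p ∈ PS r 0) : ∃ c : F3, p = fun _ => c := by
  rw [PS, pow_zero, Submodule.mem_one] at hp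
  obtain ⟨c, rfl⟩ := hp
  exact ⟨c, rfl⟩

lemma sep_exists (x : Pt r) (Y : Finset (Pt r)) (hx : x ∉ Y) :
    ∃ p ∈ PS r Y.card, p x = 1 ∧ ∀ y ∈ Y, p y = 0 := by
  induction Y using Finset.induction_on with
  | empty => exact ⟨1, PS_one_mem _, by simp, by simp⟩
  | insert z Y hz ih =>
    simp only [Finset.mem_insert, not_or] at hx
    obtain ⟨p, hp, hp1, hp0⟩ := ih hx.2
    obtain ⟨i, hi⟩ := Function.ne_iff.mp hx.1
    have hi' : x i - z i ≠ 0 := sub_ne_zero.mpr hi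
    have hl : (fun w : Pt r => w i) - (z i) • (1 : Fn r) ∈ PS r 1 := by
      rw [PS_one]
      exact Submodule.sub_mem _ (X_mem_Bs i) (Submodule.smul_mem _ _ one_mem_Bs)
    refine ⟨(x i - z i)⁻¹ • (p * ((fun w : Pt r => w i) - (z i) • (1 : Fn r))), ?_, ?_, ?_⟩
    · rw [Finset.card_insert_of_notMem hz]
      exact Submodule.smul_mem _ _ (PS_mul hp hl)
    · simp [hp1, hi']
    · intro y hy
      rcases Finset.mem_insert.mp hy with rfl | hy
      · simp
      · simp [hp0 y hy]

lemma PS_dual_zero (d : ℕ) (Φ : Fn r →ₗ[F3] F3) (h : ∀ p ∈ PS r d, ∀ q ∈ PS r d, Φ (p * q) = 0) :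
    ∀ f ∈ PS r (2 * d), Φ f = 0 := by
  intro f hf
  rw [PS, two_mul, pow_add] at hf
  induction hf using Submodule.mul_induction_on' with
  | mem_mul_mem p hp q hq => exact h p hp q hq
  | add a _ b _ ha hb => rw [map_add, ha, hb, add_zero]

lemma Bs_ind {M : Fn r → Prop} (h1 : M 1) (hX : ∀ i, M (fun x => x i))
    (hadd : ∀ p q, M p → M q → M (p + q)) (hs : ∀ (c : F3) p, M p → M (c • p)) :
    ∀ b ∈ Bs r, M b := by
  intro b hb
  unfold Bs at hb
  induction hb using Submodule.span_induction with
  | mem p hp =>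
    rcases hp with rfl | ⟨i, rfl⟩
    · exact h1
    · exact hX i
  | zero => simpa using hs 0 _ h1
  | add p q _ _ hp hq => exact hadd p q hp hq
  | smul c p _ hp => exact hs c p hp

lemma rank1 (n : ℕ) (Φ l : Fn r →ₗ[F3] F3) (κ : F3) (hκ : κ ≠ 0)
    (H : ∀ p ∈ PS r (n+2), ∀ q ∈ PS r (n+2), Φ (p * q) = κ * (l p * l q))
    (hne : ∃ p ∈ PS r (n+2), l p ≠ 0) :
    ∃ (x : Pt r) (c : F3), c ≠ 0 ∧ ∀ f ∈ PS r (2 * (n+2)), Φ f = c * f x := by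
  have H' : ∀ p ∈ PS r (n+2), ∀ q ∈ PS r (n+2), ∀ p' ∈ PS r (n+2), ∀ q' ∈ PS r (n+2),
      p * q = p' * q' → l p * l q = l p' * l q' := by
    intro p hp q hq p' hp' q' hq' h
    have h1 := H p hp q hq
    rw [h, H p' hp' q' hq'] at h1
    exact (mul_left_cancel₀ hκ h1).symm
  have hex : ∃ q ∈ PS r (n+1), l q ≠ 0 := by
    by_contra hcon
    push Not at hcon
    obtain ⟨p, hp, hlp⟩ := hne
    apply hlp
    have hsq : ∀ i, ∀ q ∈ PS r n, l ((fun x => x i) * ((fun x => x i) * q)) = 0 := by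
      intro i q hq
      have m1 : (fun x => x i) * q ∈ PS r (n+1) := by
        rw [add_comm]; exact PS_mul (PS_one (r := r) ▸ X_mem_Bs i) hq
      have m2 : (fun x => x i) * ((fun x => x i) * q) ∈ PS r (n+2) := by
        rw [show n + 2 = 1 + (n+1) by ring]; exact PS_mul (PS_one (r := r) ▸ X_mem_Bs i) m1
      have m1' := PS_mono (r := r) (show n+1 ≤ n+2 by omega) m1
      have := H' _ m2 _ m2 _ m1' _ m1' (by
        funext x
        simp only [Pi.mul_apply]
        have : ∀ a b : F3, a * (a * b) * (a * (a * b)) = a * b * (a * b) := by decide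
        exact this _ _)
      rw [hcon _ m1, mul_zero] at this
      exact mul_self_eq_zero.mp this
    have key : ∀ b ∈ Bs r, ∀ b' ∈ Bs r, ∀ q ∈ PS r n, l (b * (b' * q)) = 0 := by
      intro b hb b' hb' q hq
      revert b
      refine Bs_ind ?_ ?_ ?_ ?_
      · rw [one_mul]
        apply hcon
        rw [add_comm]; exact PS_mul (PS_one (r := r) ▸ hb') hq
      · intro i
        revert b'
        refine Bs_ind ?_ ?_ ?_ ?_
        · rw [one_mul]
          apply hcon
          rw [add_comm]; exact PS_mul (PS_one (r := r) ▸ X_mem_Bs i) hq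
        · intro j
          have mm : ∀ i j, (fun x => x i) * ((fun x => x j) * q) ∈ PS r (n+2) := by
            intro i j
            rw [show n + 2 = 1 + (1 + n) by ring]
            exact PS_mul (PS_one (r := r) ▸ X_mem_Bs i) (PS_mul (PS_one (r := r) ▸ X_mem_Bs j) hq)
          have := H' _ (mm i j) _ (mm i j) _ (mm i i) _ (mm j j) (by ring)
          rw [hsq i q hq, zero_mul] at this
          exact mul_self_eq_zero.mp this
        · intro p q hp hq
          rw [add_mul, mul_add, map_add, hp, hq, add_zero]
        · intro c p hp
          rw [smul_mul_assoc, mul_smul_comm, map_smul, hp, smul_zero]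
      · intro p q hp hq
        rw [add_mul, map_add, hp, hq, add_zero]
      · intro c p hp
        rw [smul_mul_assoc, map_smul, hp, smul_zero]
    rw [PS, show n + 2 = 1 + (1 + n) by ring, pow_add, pow_one] at hp
    induction hp using Submodule.mul_induction_on' with
    | mem_mul_mem b hb p hp =>
      rw [pow_add, pow_one] at hp
      induction hp using Submodule.mul_induction_on' with
      | mem_mul_mem b' hb' q hq => exact key b hb b' hb' q hq
      | add a _ a' _ ha hb => 
        rw [mul_add, map_add]
        by_cases h1 : l (b * a) = 0
        · by_cases h2 : l (b * a') = 0
          · rw [h1, h2, add_zero]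
          · exact absurd (hb h2) h2
        · exact absurd (ha h1) h1
    | add a _ b _ ha hb => 
        rw [map_add]
        by_cases h1 : l a = 0
        · by_cases h2 : l b = 0
          · rw [h1, h2, add_zero]
          · exact absurd (hb h2) h2
        · exact absurd (ha h1) h1
  obtain ⟨q0, hq0, hl0⟩ := hex
  set x : Pt r := fun i => l ((fun x => x i) * q0) / l q0 with hx
  have step : ∀ b ∈ Bs r, ∀ p ∈ PS r (n+1), l (b * p) = b x * l p := by
    intro b hb p hp
    revert b
    refine Bs_ind ?_ ?_ ?_ ?_
    · simp
    · intro i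
      have m : ∀ p ∈ PS r (n+1), (fun x => x i) * p ∈ PS r (n+2) := by
        intro p hp
        rw [show n + 2 = 1 + (n + 1) by ring]
        exact PS_mul (PS_one (r := r) ▸ X_mem_Bs i) hp
      have m' := PS_mono (r := r) (show n+1 ≤ n+2 by omega)
      have := H' _ (m p hp) _ (m' hq0) _ (m q0 hq0) _ (m' hp) (by ring)
      simp only [hx]
      field_simp
      linear_combination this
    · intro p q hp hq
      rw [add_mul, map_add, hp, hq, Pi.add_apply]; ring
    · intro c p hp
      rw [smul_mul_assoc, map_smul, hp, Pi.smul_apply]; simp only [smul_eq_mul]; ring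
  have full : ∀ k, k ≤ n + 2 → ∀ p ∈ PS r k, l p = p x * l 1 := by
    intro k
    induction k with
    | zero =>
      intro _ p hp
      obtain ⟨c, rfl⟩ := PS_zero_mem hp
      have : (fun _ => c : Fn r) = c • 1 := by funext; simp
      rw [this, map_smul]; simp
    | succ k ih =>
      intro hk p hp
      rw [PS, pow_succ'] at hp
      induction hp using Submodule.mul_induction_on' with
      | mem_mul_mem b hb q hq =>
        rw [step b hb q (PS_mono (by omega) hq), ih (by omega) q hq, Pi.mul_apply]; ring
      | add a _ b _ ha hb => rw [map_add, ha, hb, Pi.add_apply]; ring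
  have hl1 : l 1 ≠ 0 := by
    intro h
    apply hl0
    rw [full (n+1) (by omega) q0 hq0, h, mul_zero]
  refine ⟨x, κ * (l 1 * l 1), by simp [hκ, hl1], ?_⟩
  have := PS_dual_zero (n+2) (Φ - (κ * (l 1 * l 1)) • (LinearMap.proj x)) (by
    intro p hp q hq
    simp only [LinearMap.sub_apply, LinearMap.smul_apply, LinearMap.proj_apply, smul_eq_mul, Pi.mul_apply]
    rw [H p hp q hq, full _ le_rfl p hp, full _ le_rfl q hq]; ring)
  intro f hf
  have h := this f hf
  simp only [LinearMap.sub_apply, LinearMap.smul_apply, LinearMap.proj_apply, smul_eq_mul] at h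
  exact sub_eq_zero.mp h

lemma pow_red (a : F3) (n : ℕ) : a ^ n = a ^ (if n ≤ 2 then n else if Even n then 2 else 1) := by
  split_ifs with h1 h2
  · rfl
  · obtain ⟨m, rfl⟩ := h2
    have : m ≠ 0 := by omega
    have h : ∀ a : F3, a = 0 ∨ a ^ 2 = 1 := by decide
    rcases h a with rfl | h
    · simp; omega
    · rw [← two_mul, pow_mul, h, one_pow]
  · rw [Nat.not_even_iff_odd] at h2
    obtain ⟨m, rfl⟩ := h2
    have : m ≠ 0 := by omega
    have h : ∀ a : F3, a = 0 ∨ a ^ 2 = 1 := by decide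
    rcases h a with rfl | h
    · simp
    · rw [pow_add, pow_mul, h, one_pow, one_mul]

lemma PolySet_add {d : ℕ} {f g : Fn r} (hf : f ∈ PolySet r d) (hg : g ∈ PolySet r d) :
    f + g ∈ PolySet r d := by
  obtain ⟨P, h1, h2, h3⟩ := hf
  obtain ⟨Q, k1, k2, k3⟩ := hg
  refine ⟨P + Q, (MvPolynomial.totalDegree_add _ _).trans (by simp [h1, k1]), fun i => ?_, ?_⟩
  · exact (MvPolynomial.degreeOf_add_le _ _ _).trans (by simp [h2, k2])
  · intro x; simp [h3, k3]

lemma monomial_mem (d : ℕ) (m : Fin r →₀ ℕ) (hm : m.sum (fun _ e => e) ≤ d) (c : F3) :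
    (fun x => MvPolynomial.eval x (MvPolynomial.monomial m c)) ∈ PolySet r d := by
  classical
  set m' : Fin r →₀ ℕ := m.mapRange (fun n => if n ≤ 2 then n else if Even n then 2 else 1) (by simp) with hm'
  have hle : ∀ i, m' i ≤ m i := by
    intro i; simp only [hm', Finsupp.mapRange_apply]; split_ifs <;> omega
  have hle2 : ∀ i, m' i ≤ 2 := by
    intro i; simp only [hm', Finsupp.mapRange_apply]; split_ifs <;> omega
  refine ⟨MvPolynomial.monomial m' c, ?_, ?_, ?_⟩
  · refine (MvPolynomial.totalDegree_monomial_le _ _).trans (le_trans ?_ hm)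
    rw [Finsupp.sum_fintype _ _ (by simp), Finsupp.sum_fintype _ _ (by simp)]
    exact Finset.sum_le_sum fun i _ => hle i
  · intro i
    by_cases hc : c = 0
    · simp [hc]
    · rw [MvPolynomial.degreeOf_monomial_eq _ _ hc]; exact hle2 i
  · intro x
    beta_reduce
    rw [MvPolynomial.eval_monomial, MvPolynomial.eval_monomial, Finsupp.prod_fintype _ _ (by simp),
      Finsupp.prod_fintype _ _ (by simp)]
    congr 1
    refine Finset.prod_congr rfl fun i _ => ?_
    simp only [hm', Finsupp.mapRange_apply]
    exact pow_red _ _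

lemma PolySet_of_totalDegree (d : ℕ) (P : MvPolynomial (Fin r) F3) (hP : P.totalDegree ≤ d) :
    (fun x => MvPolynomial.eval x P) ∈ PolySet r d := by
  classical
  have hz : (0 : Fn r) ∈ PolySet r d := ⟨0, by simp, by simp, by simp⟩
  have : (fun x => MvPolynomial.eval x P) =
      ∑ m ∈ P.support, fun x => MvPolynomial.eval x (MvPolynomial.monomial m (P.coeff m)) := by
    funext x
    conv_lhs => rw [MvPolynomial.as_sum P, map_sum]
    simp
  rw [this]
  refine Finset.sum_induction _ (· ∈ PolySet r d) (fun a b => PolySet_add) hz ?_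
  intro m hm
  exact monomial_mem d m ((MvPolynomial.le_totalDegree hm).trans hP) _

lemma mem_PS_iff (d : ℕ) (f : Fn r) : f ∈ PS r d ↔ f ∈ PolySet r d := by
  classical
  constructor
  · intro hf
    have : ∀ d, ∀ f ∈ PS r d, ∃ P : MvPolynomial (Fin r) F3, P.totalDegree ≤ d ∧
        f = fun x => MvPolynomial.eval x P := by
      intro d
      induction d with
      | zero =>
        intro p hp
        obtain ⟨c, rfl⟩ := PS_zero_mem hp
        exact ⟨MvPolynomial.C c, by simp, by simp⟩
      | succ k ih =>
        intro p hp
        rw [PS, pow_succ'] at hp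
        induction hp using Submodule.mul_induction_on' with
        | mem_mul_mem b hb q hq =>
          obtain ⟨Q, hQ, rfl⟩ := ih q hq
          have hb' : ∃ P : MvPolynomial (Fin r) F3, P.totalDegree ≤ 1 ∧
              b = fun x => MvPolynomial.eval x P := by
            revert b
            refine Bs_ind ?_ ?_ ?_ ?_
            · exact ⟨1, by simp, by funext; simp⟩
            · intro i; exact ⟨MvPolynomial.X i, by simp, by funext; simp⟩
            · rintro _ _ ⟨P, hP, rfl⟩ ⟨Q, hQ, rfl⟩
              exact ⟨P + Q, (MvPolynomial.totalDegree_add _ _).trans (by simp [hP, hQ]), by funext; simp⟩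
            · rintro c _ ⟨P, hP, rfl⟩
              exact ⟨c • P, (MvPolynomial.totalDegree_smul_le _ _).trans hP, by funext; simp⟩
          obtain ⟨P, hP, rfl⟩ := hb'
          exact ⟨P * Q, (MvPolynomial.totalDegree_mul _ _).trans (by omega), by funext; simp⟩
        | add a _ b _ ha hb =>
          obtain ⟨P, hP, rfl⟩ := ha
          obtain ⟨Q, hQ, rfl⟩ := hb
          exact ⟨P + Q, (MvPolynomial.totalDegree_add _ _).trans (by simp [hP, hQ]), by funext; simp⟩
    obtain ⟨P, hP, rfl⟩ := this d f hf
    exact PolySet_of_totalDegree d P hP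
  · rintro ⟨P, hP, -, h⟩
    have : f = ∑ m ∈ P.support, P.coeff m • ∏ i : Fin r, (fun x : Pt r => x i) ^ (m i) := by
      funext x
      rw [h]
      conv_lhs => rw [MvPolynomial.as_sum P, map_sum]
      rw [Finset.sum_apply]
      refine Finset.sum_congr rfl fun m _ => ?_
      rw [MvPolynomial.eval_monomial, Finsupp.prod_fintype _ _ (by simp)]
      simp
    rw [this]
    refine Submodule.sum_mem _ fun m hm => Submodule.smul_mem _ _ ?_
    refine PS_mono ((MvPolynomial.le_totalDegree hm).trans hP) ?_
    rw [Finsupp.sum_fintype _ _ (by simp)]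
    have : ∀ s : Finset (Fin r), ∏ i ∈ s, (fun x : Pt r => x i) ^ (m i) ∈ PS r (∑ i ∈ s, m i) := by
      intro s
      induction s using Finset.induction_on with
      | empty => simpa using PS_one_mem 0
      | insert i s hi ih =>
        rw [Finset.prod_insert hi, Finset.sum_insert hi]
        exact PS_mul (Submodule.pow_mem_pow _ (X_mem_Bs i) _) ih
    exact this Finset.univ
end poly

section spec
variable {r : ℕ}

noncomputable def ee : AddChar (ZMod 3) ℂ := ZMod.stdAddChar

lemma ee_norm (a : ZMod 3) : ‖ee a‖ = 1 := AddChar.norm_apply _ _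
lemma ee_conj (a : ZMod 3) : (starRingEnd ℂ) (ee a) = ee (-a) := (AddChar.map_neg_eq_conj _ _).symm
lemma ee_sum : ∑ t, ee t = 0 := by
  apply AddChar.sum_eq_zero_of_ne_one
  exact AddChar.ne_one_iff.mpr ⟨1, fun h => by
    have := ZMod.injective_stdAddChar (N := 3) (h.trans (AddChar.map_zero_eq_one ee).symm)
    exact absurd this (by decide)⟩
lemma ee_sum_mul (c : ZMod 3) : ∑ t, ee (t * c) = if c = 0 then 3 else 0 := by
  split_ifs with h
  · simp [h]
  · rw [← ee_sum]
    exact Equiv.sum_comp (Equiv.mulRight₀ c h) ee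
lemma ee_re (c : ZMod 3) (hc : c ≠ 0) : (ee c).re = -1/2 := by
  have h := ee_sum
  rw [sum3] at h
  have h1 : ee 2 = (starRingEnd ℂ) (ee 1) := by rw [ee_conj]; rfl
  have h0 : ee 0 = 1 := AddChar.map_zero_eq_one _
  have hr := congrArg Complex.re h
  simp only [h0, Complex.add_re, Complex.one_re, Complex.zero_re] at hr
  have h2 : (ee 2).re = (ee 1).re := by rw [h1, Complex.conj_re]
  have : c = 1 ∨ c = 2 := by revert c; decide
  rcases this with rfl | rfl <;> linarith

/-- A nonzero additive functional sums to zero under the character. -/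
lemma ee_sum_hom {G : Type*} [AddCommGroup G] [Fintype G] (φ : G →+ ZMod 3) (h : ∃ g, φ g ≠ 0) :
    ∑ g, ee (φ g) = 0 := by
  have : ∑ g, (ee.compAddMonoidHom φ) g = 0 := by
    apply AddChar.sum_eq_zero_of_ne_one
    obtain ⟨g, hg⟩ := h
    refine AddChar.ne_one_iff.mpr ⟨g, fun h => hg ?_⟩
    exact ZMod.injective_stdAddChar (N := 3) (h.trans (AddChar.map_zero_eq_one ee).symm)
  simpa using this

variable (d : ℕ) 

noncomputable instance : Fintype (PS r d) := Fintype.ofFinite _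

def rad (Φ : Fn r →ₗ[F3] F3) : Submodule F3 (PS r d) where
  carrier := {t | ∀ q : PS r d, Φ (q * t) = 0}
  zero_mem' := by intro q; simp
  add_mem' := by
    intro a b ha hb q
    have h1 := ha q
    have h2 := hb q
    simp [mul_add, h1, h2]
  smul_mem' := by
    intro c a ha q
    have h1 := ha q
    simp [h1]

lemma gauss (Φ : Fn r →ₗ[F3] F3) :
    ‖∑ p : PS r d, ee (Φ (p * p : Fn r))‖^2 ≤ (Fintype.card (PS r d) : ℝ) * (Nat.card (rad d Φ) : ℝ) := by
  classical
  set S := ∑ p : PS r d, ee (Φ (p * p : Fn r)) with hS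
  have h1 : S * (starRingEnd ℂ) S = ∑ t : PS r d, ee (Φ (t * t : Fn r)) * ∑ q : PS r d, ee (2 * Φ (q * t : Fn r)) := by
    rw [hS, map_sum, Finset.sum_mul_sum, Finset.sum_comm]
    simp_rw [Finset.mul_sum]
    rw [Finset.sum_comm (s := (Finset.univ : Finset (PS r d))) (t := (Finset.univ : Finset (PS r d))) (f := fun t q => ee (Φ (t * t : Fn r)) * ee (2 * Φ (q * t : Fn r)))]
    refine Finset.sum_congr rfl fun q _ => ?_
    rw [← Equiv.sum_comp (Equiv.addRight q)]
    refine Finset.sum_congr rfl fun t _ => ?_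
    rw [ee_conj, ← AddChar.map_add_eq_mul, ← AddChar.map_add_eq_mul]
    congr 1
    simp only [Equiv.coe_addRight, Submodule.coe_add]
    have : ((t : Fn r) + q) * (t + q) = t * t + (q * t + q * t) + q * q := by ring
    rw [this, map_add, map_add, map_add]; ring
  have h2 : ‖S‖^2 = ‖S * (starRingEnd ℂ) S‖ := by
    rw [norm_mul, RCLike.norm_conj, pow_two]
  rw [h2, h1]
  refine (norm_sum_le _ _).trans ?_
  have h3 : ∀ t : PS r d, ‖ee (Φ (t * t : Fn r)) * ∑ q : PS r d, ee (2 * Φ (q * t : Fn r))‖ ≤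
      if t ∈ rad d Φ then (Fintype.card (PS r d) : ℝ) else 0 := by
    intro t
    rw [norm_mul, ee_norm, one_mul]
    split_ifs with ht
    · refine (norm_sum_le _ _).trans ?_
      simp
    · have : ∃ q : PS r d, Φ (q * t) ≠ 0 := by
        by_contra hcon
        push Not at hcon
        exact ht hcon
      obtain ⟨q, hq⟩ := this
      have := ee_sum_hom (G := PS r d)
        { toFun := fun q => 2 * Φ (q * t : Fn r)
          map_zero' := by simp
          map_add' := by intro a b; simp [add_mul, mul_add] } ⟨q, by
            simp only [AddMonoidHom.coe_mk, ZeroHom.coe_mk]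
            exact mul_ne_zero (by decide) hq⟩
      simp only [AddMonoidHom.coe_mk, ZeroHom.coe_mk] at this
      rw [this]; simp
  refine (Finset.sum_le_sum fun t _ => h3 t).trans ?_
  rw [← Finset.sum_filter, Finset.sum_const, nsmul_eq_mul, mul_comm]
  have : (Finset.univ.filter (· ∈ rad d Φ)).card = Nat.card (rad d Φ) := by
    rw [Nat.card_eq_fintype_card, Fintype.card_subtype]
  rw [this]

lemma rad_small (Φ : Fn r →ₗ[F3] F3) (hd : 2 ≤ d) :
    9 * Nat.card (rad d Φ) ≤ Fintype.card (PS r d) ∨ (∀ f ∈ PS r (2 * d), Φ f = 0) ∨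
    ∃ (x : Pt r) (c : F3), c ≠ 0 ∧ ∀ f ∈ PS r (2 * d), Φ f = c * f x := by
  have hfr := Submodule.finrank_quotient_add_finrank (rad d Φ)
  by_cases hq : 2 ≤ Module.finrank F3 (PS r d ⧸ rad d Φ)
  · left
    have h1 := Module.card_eq_pow_finrank (K := F3) (V := PS r d)
    have h2 := Module.natCard_eq_pow_finrank (K := F3) (V := rad d Φ)
    rw [h1, h2, ← hfr, Nat.card_eq_fintype_card, ZMod.card, pow_add]
    have : 3 ^ 2 ≤ 3 ^ Module.finrank F3 (PS r d ⧸ rad d Φ) := Nat.pow_le_pow_right (by norm_num) hq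
    exact Nat.mul_le_mul_right _ this
  right
  have hle : Module.finrank F3 (PS r d ⧸ rad d Φ) ≤ 1 := by omega
  obtain ⟨w, hw⟩ := finrank_le_one_iff.mp hle
  obtain ⟨v, rfl⟩ := Submodule.Quotient.mk_surjective _ w
  have hdec : ∀ t : PS r d, ∃ c : F3, ∃ z ∈ rad d Φ, t = c • v + z := by
    intro t
    obtain ⟨c, hc⟩ := hw (Submodule.Quotient.mk t)
    refine ⟨c, t - c • v, ?_, by abel⟩
    rw [← Submodule.Quotient.mk_smul] at hc
    exact (Submodule.Quotient.eq _).mp hc.symm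
  have hmul : ∀ p q : PS r d, Φ (p * q : Fn r) * Φ (v * v : Fn r) = Φ (p * v : Fn r) * Φ (q * v : Fn r) ∧
     (Φ (v * v : Fn r) = 0 → Φ (p * q : Fn r) = 0) := by
    intro p q
    obtain ⟨c, z, hz, rfl⟩ := hdec p
    obtain ⟨c', z', hz', rfl⟩ := hdec q
    have a1 : Φ (v * z : Fn r) = 0 := hz v
    have a2 : Φ (v * z' : Fn r) = 0 := hz' v
    have a3 : Φ (z * z' : Fn r) = 0 := hz' z
    have e1 : ((c • v + z : PS r d) : Fn r) * ((c' • v + z' : PS r d) : Fn r) =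
       (c * c') • (v * v : Fn r) + c • (v * z' : Fn r) + c' • (v * z : Fn r) + z * z' := by
      funext x; simp; ring
    have e2 : ∀ (c : F3) (z : PS r d), ((c • v + z : PS r d) : Fn r) * v = c • (v * v : Fn r) + v * z := by
      intro c z; funext x; simp; ring
    rw [e1, e2, e2]
    simp only [map_add, map_smul, a1, a2, a3, smul_eq_mul]
    constructor
    · ring
    · intro h; rw [h]; ring
  by_cases hv : Φ (v * v : Fn r) = 0
  · left
    exact PS_dual_zero d Φ fun p hp q hq => (hmul ⟨p, hp⟩ ⟨q, hq⟩).2 hv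
  · right
    obtain ⟨n, rfl⟩ : ∃ n, d = n + 2 := ⟨d - 2, by omega⟩
    refine rank1 n Φ (Φ ∘ₗ LinearMap.mulRight F3 (v : Fn r)) (Φ (v * v : Fn r))⁻¹ (inv_ne_zero hv) ?_ ?_
    · intro p hp q hq
      have := (hmul ⟨p, hp⟩ ⟨q, hq⟩).1
      simp only [LinearMap.comp_apply, LinearMap.mulRight_apply]
      rw [← this]
      field_simp
    · exact ⟨v, v.2, by simpa using hv⟩


lemma eig_low (Φ : Fn r →ₗ[F3] F3)
    (h : 9 * Nat.card (rad d Φ) ≤ Fintype.card (PS r d)) :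
    -(Fintype.card (PS r d) : ℝ)/3 ≤ ∑ p : PS r d, (ee (Φ (p * p + 1 : Fn r))).re := by
  have h1 := gauss d Φ
  set S := ∑ p : PS r d, ee (Φ (p * p : Fn r)) with hS
  set N := (Fintype.card (PS r d) : ℝ) with hN
  have hN0 : 0 ≤ N := by positivity
  have h2 : (9 * (Nat.card (rad d Φ) : ℝ)) ≤ N := by rw [hN]; exact_mod_cast h
  have h3 : ‖S‖ ≤ N/3 := by
    apply le_of_sq_le_sq _ (by positivity)
    nlinarith
  have h4 : ∑ p : PS r d, (ee (Φ (p * p + 1 : Fn r))).re = (S * ee (Φ 1)).re := by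
    rw [← Complex.re_sum, hS, Finset.sum_mul]
    simp only [map_add, AddChar.map_add_eq_mul]
  rw [h4]
  have h5 := Complex.abs_re_le_norm (S * ee (Φ 1))
  rw [norm_mul, ee_norm, mul_one] at h5
  have := (abs_le.mp h5).1
  linarith

lemma eig_pt (c : F3) (hc : c ≠ 0) (x : Pt r) :
    ∑ p : PS r d, (ee (c * (p * p + 1 : Fn r) x)).re = -(Fintype.card (PS r d) : ℝ)/2 := by
  have : ∀ p : PS r d, (ee (c * (p * p + 1 : Fn r) x)).re = -1/2 := by
    intro p
    apply ee_re
    simp only [Pi.add_apply, Pi.mul_apply, Pi.one_apply]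
    revert hc
    generalize (p : Fn r) x = s
    revert c s
    decide
  rw [Finset.sum_congr rfl fun p _ => this p]
  simp; ring

lemma sq_mem {d : ℕ} (p : PS r d) : (p * p + 1 : Fn r) ∈ PS r (2 * d) := by
  refine Submodule.add_mem _ ?_ (PS_one_mem _)
  rw [two_mul]; exact PS_mul p.2 p.2

noncomputable instance : Fintype (Module.Dual F3 (PS r d)) :=
  @Fintype.ofFinite _ (DFunLike.finite _)

lemma card_dual : Fintype.card (Module.Dual F3 (PS r d)) = Fintype.card (PS r d) := by
  rw [Module.card_eq_pow_finrank (K := F3) (V := PS r d),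
    Module.card_eq_pow_finrank (K := F3) (V := Module.Dual F3 (PS r d)), Subspace.dual_finrank_eq]

lemma dual_orth (v : PS r d) :
    ∑ φ : Module.Dual F3 (PS r d), ee (φ v) = if v = 0 then (Fintype.card (PS r d) : ℂ) else 0 := by
  split_ifs with h
  · simp [h, card_dual]
  · have : ∃ φ : Module.Dual F3 (PS r d), φ v ≠ 0 := by
      by_contra hcon
      push Not at hcon
      exact h ((Module.forall_dual_apply_eq_zero_iff F3 v).mp hcon)
    have := ee_sum_hom (G := Module.Dual F3 (PS r d)) (Module.Dual.eval F3 (PS r d) v).toAddMonoidHom this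
    simpa using this

noncomputable def hat (A : Finset (PS r d)) (φ : Module.Dual F3 (PS r d)) : ℂ := ∑ f ∈ A, ee (φ f)

noncomputable def wt (A : Finset (PS r d)) (φ : Module.Dual F3 (PS r d)) : ℝ := Complex.normSq (hat d A φ)

lemma wt_eq (A : Finset (PS r d)) (φ : Module.Dual F3 (PS r d)) :
    (wt d A φ : ℂ) = ∑ f ∈ A, ∑ g ∈ A, ee (φ (f - g)) := by
  rw [wt, ← Complex.mul_conj, hat, map_sum, Finset.sum_mul_sum]
  simp only [ee_conj, ← AddChar.map_add_eq_mul, map_sub]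
  simp only [sub_eq_add_neg]

lemma autocorr (A : Finset (PS r d)) (s : PS r d) :
    ∑ φ, (wt d A φ : ℂ) * ee (φ s) =
      ∑ f ∈ A, ∑ g ∈ A, if f - g + s = 0 then (Fintype.card (PS r d) : ℂ) else 0 := by
  simp_rw [wt_eq, Finset.sum_mul]
  rw [Finset.sum_comm]
  refine Finset.sum_congr rfl fun f _ => ?_
  rw [Finset.sum_comm]
  refine Finset.sum_congr rfl fun g _ => ?_
  rw [← dual_orth]
  refine Finset.sum_congr rfl fun φ _ => ?_
  rw [map_add, AddChar.map_add_eq_mul]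

lemma autocorr0 (A : Finset (PS r d)) :
    ∑ φ, wt d A φ = (Fintype.card (PS r d) : ℝ) * A.card := by
  classical
  have h := autocorr d A 0
  simp only [map_zero, AddChar.map_zero_eq_one, mul_one, add_zero, sub_eq_zero] at h
  have h2 : ∑ f ∈ A, ∑ g ∈ A, (if f = g then (Fintype.card (PS r d) : ℂ) else 0) =
      (Fintype.card (PS r d) : ℂ) * A.card := by
    rw [Finset.sum_congr rfl fun f hf => by rw [Finset.sum_ite_eq, if_pos hf]]
    simp [mul_comm]
  rw [h2] at h
  exact_mod_cast h

def evd (x : Pt r) : Module.Dual F3 (PS r d) := (LinearMap.proj x) ∘ₗ (PS r d).subtype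

lemma wt_zero (A : Finset (PS r d)) : wt d A 0 = (A.card : ℝ)^2 := by
  simp [wt, hat, Complex.normSq_natCast, pow_two]

lemma wt_point (A : Finset (PS r d)) (x : Pt r) :
    ∑ c : F3, wt d A (c • evd d x) =
      3 * ∑ b : F3, ((A.filter fun f => f.1 x = b).card : ℝ)^2 := by
  classical
  have h : (∑ c : F3, (wt d A (c • evd d x) : ℂ)) =
      ∑ f ∈ A, ∑ g ∈ A, if (f : Fn r) x = (g : Fn r) x then (3 : ℂ) else 0 := by
    simp_rw [wt_eq]
    rw [Finset.sum_comm]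
    refine Finset.sum_congr rfl fun f _ => ?_
    rw [Finset.sum_comm]
    refine Finset.sum_congr rfl fun g _ => ?_
    have := ee_sum_mul ((f : Fn r) x - (g : Fn r) x)
    simp only [sub_eq_zero] at this
    rw [← this]
    rfl
  have h2 : (∑ c : F3, wt d A (c • evd d x)) =
      ∑ f ∈ A, ∑ g ∈ A, if (f : Fn r) x = (g : Fn r) x then (3 : ℝ) else 0 := by
    have h' := congrArg Complex.re h
    simp only [Complex.re_sum, Complex.ofReal_re] at h'
    rw [h']
    refine Finset.sum_congr rfl fun f _ => Finset.sum_congr rfl fun g _ => ?_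
    split_ifs <;> simp
  rw [h2, Finset.mul_sum]
  have h3 : ∀ f ∈ A, ∑ g ∈ A, (if (f : Fn r) x = (g : Fn r) x then (3 : ℝ) else 0) =
      ∑ b : F3, if (f : Fn r) x = b then 3 * ((A.filter fun f => f.1 x = b).card : ℝ) else 0 := by
    intro f _
    rw [Finset.sum_ite_eq, if_pos (Finset.mem_univ _), ← Finset.sum_filter, Finset.sum_const, nsmul_eq_mul, mul_comm]
    simp only [eq_comm]
  rw [Finset.sum_congr rfl h3, Finset.sum_comm]
  refine Finset.sum_congr rfl fun b _ => ?_
  rw [← Finset.sum_filter, Finset.sum_const, nsmul_eq_mul]; ring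

lemma wt_nonneg (A : Finset (PS r d)) (φ : Module.Dual F3 (PS r d)) : 0 ≤ wt d A φ := Complex.normSq_nonneg _

lemma spectral (hd : 2 ≤ d) (A : Finset (PS r (2*d)))
    (hA : ∀ f ∈ A, ∀ g ∈ A, ∀ p : PS r d, (g : Fn r) ≠ f + (p * p + 1 : Fn r)) :
    0 ≥ -(1/3) * ((Fintype.card (PS r (2*d)) : ℝ) * A.card) + 4/3 * (A.card : ℝ)^2
      - 1/6 * ∑ x : Pt r, (3 * ∑ b : F3, ((A.filter fun f => f.1 x = b).card : ℝ)^2 - (A.card : ℝ)^2) := by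
  classical
  set N := (Fintype.card (PS r d) : ℝ) with hN
  have hN0 : 0 < N := cardpos
  set R : Module.Dual F3 (PS r (2*d)) → ℝ := fun φ => ∑ p : PS r d, (ee (φ ⟨_, sq_mem p⟩)).re with hR
  have hzero : ∑ φ, wt (2*d) A φ * R φ = 0 := by
    simp only [hR, Finset.mul_sum]
    rw [Finset.sum_comm]
    refine Finset.sum_eq_zero fun p _ => ?_
    have h := autocorr (2*d) A ⟨_, sq_mem p⟩
    rw [Finset.sum_eq_zero (fun f hf => Finset.sum_eq_zero fun g hg => by
      rw [if_neg]
      intro h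
      apply hA f hf g hg p
      have h' := congrArg (Subtype.val) h
      simp only [Submodule.coe_add, Submodule.coe_sub, Submodule.coe_zero] at h'
      rw [← sub_eq_zero, ← neg_eq_zero, ← h']; abel)] at h
    have h' := congrArg Complex.re h
    simpa only [Complex.re_sum, Complex.re_ofReal_mul, Complex.zero_re] using h'
  have hlow : ∀ φ, N * (-(1/3) + 4/3 * (if φ = 0 then 1 else 0)
      - 1/6 * ∑ x : Pt r, ((if φ = (1 : F3) • evd (2*d) x then 1 else 0) + (if φ = (2 : F3) • evd (2*d) x then 1 else 0))) ≤ R φ := by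
    intro φ
    have hnn : ∀ x : Pt r, (0:ℝ) ≤ ((if φ = (1 : F3) • evd (2*d) x then 1 else 0) + (if φ = (2 : F3) • evd (2*d) x then 1 else 0)) := by
      intro x; split_ifs <;> norm_num
    have hsum := Finset.sum_nonneg fun x (_ : x ∈ Finset.univ) => hnn x
    obtain ⟨Φ, hΦ⟩ := LinearMap.exists_extend φ
    have hφ : ∀ f : PS r (2*d), φ f = Φ f := fun f => by rw [← hΦ]; rfl
    by_cases h0 : φ = 0
    · have : R φ = N := by simp [hR, h0, hN]
      rw [this, if_pos h0]
      nlinarith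
    rw [if_neg h0]
    rcases rad_small d Φ hd with h | h | ⟨x, c, hc, h⟩
    · have := eig_low d Φ h
      have hRe : R φ = ∑ p : PS r d, (ee (Φ (p * p + 1 : Fn r))).re := by simp only [hR, hφ]
      rw [hRe]
      nlinarith
    · exfalso; apply h0
      ext f; rw [hφ, h f f.2]; rfl
    · have hRe : R φ = -N/2 := by
        rw [hN, ← eig_pt d c hc x]
        simp only [hR, hφ]
        refine Finset.sum_congr rfl fun p _ => ?_
        rw [h _ (sq_mem p)]
      have heq : φ = c • evd (2*d) x := by
        ext f; rw [hφ, h f f.2]; rfl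
      have h1 : (1:ℝ) ≤ ((if φ = (1 : F3) • evd (2*d) x then 1 else 0) + (if φ = (2 : F3) • evd (2*d) x then 1 else 0)) := by
        have : c = 1 ∨ c = 2 := by clear * - hc; revert c; decide
        rcases this with rfl | rfl
        · rw [if_pos heq]; split_ifs <;> norm_num
        · rw [if_pos heq]; split_ifs <;> norm_num
      have h2 := Finset.single_le_sum (fun x (_ : x ∈ Finset.univ) => hnn x) (Finset.mem_univ x)
      rw [hRe]
      nlinarith
  have hfin : ∑ φ, wt (2*d) A φ * (N * (-(1/3) + 4/3 * (if φ = 0 then 1 else 0)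
      - 1/6 * ∑ x : Pt r, ((if φ = (1 : F3) • evd (2*d) x then 1 else 0) + (if φ = (2 : F3) • evd (2*d) x then 1 else 0)))) ≤ 0 := by
    refine le_of_le_of_eq ?_ hzero
    exact Finset.sum_le_sum fun φ _ => mul_le_mul_of_nonneg_left (hlow φ) (wt_nonneg _ _ _)
  have hexp : ∑ φ, wt (2*d) A φ * (N * (-(1/3) + 4/3 * (if φ = 0 then 1 else 0)
      - 1/6 * ∑ x : Pt r, ((if φ = (1 : F3) • evd (2*d) x then 1 else 0) + (if φ = (2 : F3) • evd (2*d) x then 1 else 0)))) =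
      N * (-(1/3) * ∑ φ, wt (2*d) A φ + 4/3 * wt (2*d) A 0
        - 1/6 * ∑ x : Pt r, (wt (2*d) A ((1 : F3) • evd (2*d) x) + wt (2*d) A ((2 : F3) • evd (2*d) x))) := by
    have e1 : wt (2*d) A 0 = ∑ φ, wt (2*d) A φ * (if φ = 0 then 1 else 0) := by simp
    have e2 : ∀ ψ, wt (2*d) A ψ = ∑ φ, wt (2*d) A φ * (if φ = ψ then 1 else 0) := by intro ψ; simp
    have e3 : ∑ x : Pt r, (wt (2*d) A ((1 : F3) • evd (2*d) x) + wt (2*d) A ((2 : F3) • evd (2*d) x)) =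
        ∑ φ, wt (2*d) A φ * ∑ x : Pt r, ((if φ = (1 : F3) • evd (2*d) x then 1 else 0) + (if φ = (2 : F3) • evd (2*d) x then 1 else 0)) := by
      simp_rw [Finset.mul_sum]
      rw [Finset.sum_comm]
      refine Finset.sum_congr rfl fun x _ => ?_
      rw [e2 ((1 : F3) • evd (2*d) x), e2 ((2 : F3) • evd (2*d) x), ← Finset.sum_add_distrib]
      refine Finset.sum_congr rfl fun φ _ => ?_
      ring
    rw [e1, e3, Finset.mul_sum, Finset.mul_sum, Finset.mul_sum, ← Finset.sum_add_distrib,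
      ← Finset.sum_sub_distrib, Finset.mul_sum]
    refine Finset.sum_congr rfl fun φ _ => ?_
    ring
  rw [hexp, autocorr0, wt_zero] at hfin
  have hpt : ∀ x : Pt r, wt (2*d) A ((1 : F3) • evd (2*d) x) + wt (2*d) A ((2 : F3) • evd (2*d) x) =
      3 * ∑ b : F3, ((A.filter fun f => f.1 x = b).card : ℝ)^2 - (A.card : ℝ)^2 := by
    intro x
    rw [← wt_point, sum3, zero_smul, wt_zero]; ring
  rw [Finset.sum_congr rfl fun x _ => hpt x] at hfin
  exact nonpos_of_mul_nonpos_right hfin hN0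
end spec
end FK

/-- There are universal `d₀ ∈ ℕ`, `ε₀ > 0`, `C > 0` such that for all `d ≥ d₀`, all `r` and
all `ε ∈ (0, ε₀)`: an independent set `A` of the graph `𝒢` on `P_{r,2d}` of size
at least `(1/3 − ε)·|P_{r,2d}|` is within symmetric difference `C·ε·|P_{r,2d}|`
of some dictator. -/
theorem stmt3 :
    ∃ (d₀ : ℕ) (ε₀ C : ℝ), 0 < ε₀ ∧ 0 < C ∧
      ∀ d : ℕ, d₀ ≤ d → ∀ r : ℕ, ∀ ε : ℝ, 0 < ε → ε < ε₀ →
        ∀ A : Finset (Fn r), ↑A ⊆ PolySet r (2 * d) →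
          (∀ f ∈ A, ∀ p ∈ polyFinset r d, ∀ a : F3, (a = 1 ∨ a = 2) →
            f + shift p a ∉ A) →
          (1 / 3 - ε) * (polyFinset r (2 * d)).card ≤ (A.card : ℝ) →
          ∃ (x : Pt r) (b : F3),
            (Nat.card ↥(symmDiff (A : Set (Fn r)) {f | f ∈ PolySet r (2 * d) ∧ f x = b}) : ℝ)
              ≤ C * ε * (polyFinset r (2 * d)).card := by
  classical
  refine ⟨2, 1/1000000000, 6, by norm_num, by norm_num, ?_⟩
  intro d hd r ε hε0 hε A hAsub hind hcard
  have hmem : ∀ f, f ∈ FK.PS r (2*d) ↔ f ∈ PolySet r (2*d) := FK.mem_PS_iff (2*d)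
  set A' : Finset (FK.PS r (2*d)) := Finset.univ.filter (fun f => f.1 ∈ A) with hA'
  have hmap : A'.map ⟨Subtype.val, Subtype.val_injective⟩ = A := by
    ext f
    simp only [hA', Finset.mem_map, Finset.mem_filter, Finset.mem_univ, true_and,
      Function.Embedding.coeFn_mk]
    constructor
    · rintro ⟨g, hg, rfl⟩; exact hg
    · intro hf; exact ⟨⟨f, (hmem f).mpr (hAsub hf)⟩, hf, rfl⟩
  have hAc : A'.card = A.card := by rw [← hmap, Finset.card_map]
  have hVc : (polyFinset r (2*d)).card = Fintype.card (FK.PS r (2*d)) := by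
    have h1 : (FK.PS r (2*d) : Set (Fn r)) = PolySet r (2*d) := Set.ext hmem
    rw [polyFinset, ← Set.ncard_eq_toFinset_card, ← h1, ← Nat.card_eq_fintype_card]
    rfl
  rw [hVc] at hcard ⊢
  set N : ℝ := (Fintype.card (FK.PS r (2*d)) : ℝ) with hN
  have hN0 : 0 < N := FK.cardpos
  set ev : FK.PS r (2*d) →+ (Pt r → ZMod 3) := (FK.PS r (2*d)).subtype.toAddMonoidHom with hev
  have hevx : ∀ f x, ev f x = f.1 x := fun _ _ => rfl
  have hsep : FK.Sep ev := by
    intro x Y hY hx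
    obtain ⟨p, hp, h1, h2⟩ := FK.sep_exists x Y hx
    exact ⟨⟨p, FK.PS_mono (by omega) hp⟩, h1, h2⟩
  set F : FK.PS r (2*d) → ℝ := fun f => if f ∈ A' then 1 else 0 with hF
  have hEF : FK.E F = (A'.card : ℝ) / N := by
    simp [FK.E, hF, hN]
  have hEv : ∀ x b, FK.E (fun f => F f * (if ev f x = b then 1 else 0)) =
      ((A'.filter fun f => f.1 x = b).card : ℝ) / N := by
    intro x b
    unfold FK.E
    congr 1
    rw [Finset.card_filter, Nat.cast_sum, ← Finset.sum_subset (Finset.subset_univ A')]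
    · refine Finset.sum_congr rfl fun f hf => ?_
      simp [hF, hf, hevx]
    · intro f _ hf; simp [hF, hf]
  have hspec := FK.spectral d hd A' (by
    intro f hf g hg p h
    have hf' : f.1 ∈ A := by simpa [hA'] using hf
    have hg' : g.1 ∈ A := by simpa [hA'] using hg
    refine hind f.1 hf' p.1 ?_ 1 (Or.inl rfl) ?_
    · rw [polyFinset, Set.Finite.mem_toFinset, ← FK.mem_PS_iff]; exact p.2
    · have : f.1 + shift p.1 1 = g.1 := by
        rw [h]; funext x; simp [shift, pow_two]
      rw [this]; exact hg')
  obtain ⟨x, b, hxb⟩ := FK.fkn ev hsep F (fun f => by simp only [hF]; split_ifs <;> simp)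
    (fun x b => 3 * (((A'.filter fun f => f.1 x = b).card : ℝ) / N)) ((A'.card : ℝ) / N) ε hEF
    (fun x b => by rw [hEv]) hε (by rw [le_div_iff₀ hN0, hAc]; exact hcard) (by
      have hsumb : ∀ x : Pt r, ∑ b : F3, ((A'.filter fun f => f.1 x = b).card : ℝ) = A'.card := by
        intro x
        rw [← Nat.cast_sum]
        congr 1
        exact (Finset.card_eq_sum_card_fiberwise (fun _ _ => Finset.mem_coe.mpr (Finset.mem_univ _))).symm
      have hW : ∀ x : Pt r, (∑ b : F3, (3 * (((A'.filter fun f => f.1 x = b).card : ℝ) / N) - (A'.card : ℝ) / N)^2)/3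
          = (3 * ∑ b : F3, ((A'.filter fun f => f.1 x = b).card : ℝ)^2 - (A'.card : ℝ)^2) / N^2 := by
        intro x
        have := hsumb x
        rw [FK.sum3] at this ⊢
        rw [FK.sum3, ← this]
        field_simp
        ring
      rw [Finset.sum_congr rfl fun x _ => hW x, ← Finset.sum_div, le_div_iff₀ (by positivity)]
      have e : (8 * ((A'.card : ℝ) / N)^2 - 2 * ((A'.card : ℝ) / N)) * N^2 =
          8 * (A'.card : ℝ)^2 - 2 * (N * A'.card) := by
        field_simp
      rw [e]
      linarith)
  refine ⟨x, b, ?_⟩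
  set D : Finset (FK.PS r (2*d)) := Finset.univ.filter (fun f => ¬ (f ∈ A' ↔ f.1 x = b)) with hD
  have hcardD : Nat.card ↥(symmDiff (A : Set (Fn r)) {f | f ∈ PolySet r (2 * d) ∧ f x = b}) = D.card := by
    have : symmDiff (A : Set (Fn r)) {f | f ∈ PolySet r (2 * d) ∧ f x = b} = Subtype.val '' (D : Set (FK.PS r (2*d))) := by
      ext f
      simp only [Set.mem_symmDiff, Finset.mem_coe, Set.mem_setOf_eq, Set.mem_image, hD, hA',
        Finset.mem_filter, Finset.mem_univ, true_and]
      constructor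
      · intro h
        have hf : f ∈ PolySet r (2*d) := by
          rcases h with h | h
          · exact hAsub h.1
          · exact h.1.1
        refine ⟨⟨f, (hmem f).mpr hf⟩, ?_, rfl⟩
        simp only
        tauto
      · rintro ⟨g, hg, rfl⟩
        have := (hmem g.1).mp g.2
        tauto
    rw [this]
    change (Subtype.val '' (D : Set (FK.PS r (2*d)))).ncard = _
    rw [Set.ncard_image_of_injective _ Subtype.val_injective, Set.ncard_coe_finset]
  rw [hcardD]
  have hE : FK.E (fun f => (F f - (if ev f x = b then 1 else 0))^2) = (D.card : ℝ) / N := by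
    unfold FK.E
    congr 1
    rw [hD, Finset.card_filter, Nat.cast_sum]
    refine Finset.sum_congr rfl fun f _ => ?_
    simp only [hF, hevx]
    by_cases h1 : f ∈ A' <;> by_cases h2 : f.1 x = b <;> simp [h1, h2]
  rw [hE, div_le_iff₀ hN0] at hxb
  exact hxb
end
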